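/- arXiv:1305.5669 — 3 statements merged into one kernel-verified Lean document; each statement's English description precedes it below -/
import Mathlib

section
/- Let a, b be real numbers with a > −1/2 and b > −1, and let n, m be natural numbers. Assume 2(a+b) + j ≠ 0 for every odd integer j with 1 ≤ |j| ≤ 2·max(n,m) + 1. Then, with the generalized ultraspherical initial vector (p,q,r,s) = (−1, 1, −2a−2b−2, 2a), ∫_{−1}^{1} |x|^{2a} (1−x²)^{b} · S̄_n(−1,1,−2a−2b−2,2a;x) · S̄_m(−1,1,−2a−2b−2,2a;x) dx = δ_{n,m} · (−1)^n · (∏_{i=1}^{n} [ −(i + (1−(−1)^i)a)(i + (1−(−1)^i)a + 2b) / ((2i + 2a + 2b − 1)(2i + 2a + 2b + 1)) ]) · Γ(a + 1/2)Γ(b + 1)/Γ(a + b + 3/2), where δ_{n,m} is 1 if n = m and 0 otherwise. -/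
open Finset Real MeasureTheory

/-- The basic class of symmetric orthogonal polynomials `S_n(p,q,r,s;x)`. -/
noncomputable def S (p q r s : ℝ) (n : ℕ) (x : ℝ) : ℝ :=
  ∑ k ∈ Finset.range (n / 2 + 1),
    (Nat.choose (n / 2) k : ℝ) *
      (∏ i ∈ Finset.range (n / 2 - k),
        ((2 * (i : ℝ) + (-1 : ℝ) ^ (n + 1) + 2 * ((n / 2 : ℕ) : ℝ)) * p + r) /
        ((2 * (i : ℝ) + (-1 : ℝ) ^ (n + 1) + 2) * q + s)) *
      x ^ (n - 2 * k)

/-- The monic normalization `S̄_n(p,q,r,s;x)`. -/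
noncomputable def Sbar (p q r s : ℝ) (n : ℕ) (x : ℝ) : ℝ :=
  (∏ i ∈ Finset.range (n / 2),
    ((2 * (i : ℝ) + (-1 : ℝ) ^ (n + 1) + 2) * q + s) /
    ((2 * (i : ℝ) + (-1 : ℝ) ^ (n + 1) + 2 * ((n / 2 : ℕ) : ℝ)) * p + r)) *
    S p q r s n x

/-- The rising factorial `x (x + 1) ⋯ (x + n - 1)`. -/
noncomputable def rising (n : ℕ) (x : ℝ) : ℝ := (ascPochhammer ℝ n).eval x

lemma rising_add (n m : ℕ) (x : ℝ) : rising (n + m) x = rising n x * rising m (x + n) := by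
  simp [rising, ← ascPochhammer_mul]

lemma rising_one_add (n : ℕ) (x : ℝ) : rising (n + 1) x = x * rising n (x + 1) := by
  rw [add_comm, rising_add]
  simp [rising]

lemma rising_succ (n : ℕ) (x : ℝ) : rising (n + 1) x = rising n x * (x + n) :=
  ascPochhammer_succ_eval n x

lemma rising_pos (n : ℕ) {x : ℝ} (hx : 0 < x) : 0 < rising n x :=
  ascPochhammer_pos n x hx

lemma rising_eq_prod (n : ℕ) (x : ℝ) : rising n x = ∏ i ∈ range n, (x + i) := by
  induction n with
  | zero => simp [rising]
  | succ n ih => rw [rising_succ, prod_range_succ, ih]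

lemma rising_reflect (n : ℕ) (x : ℝ) : rising (n + 1) (-x - n) =
    (-1) ^ (n + 1) * rising (n + 1) x := by
  have h := descPochhammer_eval_eq_ascPochhammer ℝ (-x) (n + 1)
  have h2 := ascPochhammer_eval_neg_eq_descPochhammer ℝ (-x) (n + 1)
  rw [neg_neg] at h2
  rw [show -x - ((n + 1 : ℕ) : ℝ) + 1 = -x - n by push_cast; ring] at h
  rw [rising, rising, h2, ← h, ← mul_assoc, ← mul_pow]
  simp

lemma Gamma_add_natCast {x : ℝ} (hx : 0 < x) (n : ℕ) :
    Real.Gamma (x + n) = rising n x * Real.Gamma x := by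
  induction n with
  | zero => simp [rising]
  | succ n ih =>
    rw [Nat.cast_succ, ← add_assoc, Real.Gamma_add_one (by positivity), ih, rising_succ]
    ring

lemma sum_alternating_choose_eq_fwdDiff (f : ℝ → ℝ) (n : ℕ) :
    ∑ j ∈ range (n + 1), (-1 : ℝ) ^ j * n.choose j * f j = (-1) ^ n * (fwdDiff 1)^[n] f 0 := by
  rw [fwdDiff_iter_eq_sum_shift, mul_sum]
  refine sum_congr rfl fun j hj => ?_
  have hj : j ≤ n := by simpa [Nat.lt_succ_iff] using hj
  obtain ⟨k, rfl⟩ := Nat.exists_eq_add_of_le hj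
  have h1 : ((-1 : ℝ) ^ k) * (-1) ^ k = 1 := by rw [← mul_pow]; simp
  simp only [Nat.add_sub_cancel_left, zsmul_eq_mul, nsmul_eq_mul, mul_one, zero_add]
  push_cast
  rw [pow_add]
  linear_combination (-(-1 : ℝ) ^ j * (j + k).choose j * f j) * h1

lemma fwdDiff_iter_inv (n : ℕ) {x : ℝ} (hx : 0 < x) {y : ℝ} (hy : 0 ≤ y) :
    (fwdDiff 1)^[n] (fun t => (x + t)⁻¹) y =
      (-1) ^ n * n.factorial / rising (n + 1) (x + y) := by
  induction n generalizing y with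
  | zero => simp [rising]
  | succ n ih =>
    rw [Function.iterate_succ_apply', fwdDiff, ih hy, ih (by positivity)]
    have h1 := (rising_pos (n + 1) (show 0 < x + y + 1 by positivity)).ne'
    have h2 := (rising_pos (n + 1) (show 0 < x + y by positivity)).ne'
    have h3 := (rising_pos (n + 1 + 1) (show 0 < x + y by positivity)).ne'
    have e1 : (rising (n + 1) (x + y + 1))⁻¹ = (x + y) / rising (n + 1 + 1) (x + y) := by
      rw [rising_one_add (n + 1) (x + y)] at h3 ⊢
      field_simp
    have e2 : (rising (n + 1) (x + y))⁻¹ = (x + y + (n + 1)) / rising (n + 1 + 1) (x + y) := by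
      rw [rising_succ (n + 1) (x + y)] at h3 ⊢
      push_cast at h3 ⊢
      field_simp
    rw [← add_assoc, pow_succ, Nat.factorial_succ, div_eq_mul_inv, e1,
      div_eq_mul_inv _ (rising (n + 1) (x + y)), e2]
    push_cast
    ring

lemma sum_alternating_choose_polynomial_div (p : Polynomial ℝ) (n : ℕ) (hp : p.natDegree ≤ n)
    {x : ℝ} (hx : 0 < x) :
    ∑ j ∈ range (n + 1), (-1 : ℝ) ^ j * n.choose j * (p.eval (j : ℝ) / (x + j)) =
      p.eval (-x) * n.factorial / rising (n + 1) x := by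
  have hsplit : ∀ t : ℝ, p.eval t = p.eval (-x) + (x + t) * (p /ₘ (.X - .C (-x))).eval t := by
    intro t
    conv_lhs => rw [← Polynomial.modByMonic_add_div p (.X - .C (-x)),
      Polynomial.modByMonic_X_sub_C_eq_C_eval]
    simp [add_comm]
  have hsum : ∀ j ∈ range (n + 1), (-1 : ℝ) ^ j * n.choose j * (p.eval (j : ℝ) / (x + j)) =
      p.eval (-x) * ((-1 : ℝ) ^ j * n.choose j * (x + j)⁻¹) +
      (-1 : ℝ) ^ j * n.choose j * (p /ₘ (.X - .C (-x))).eval (j : ℝ) := by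
    intro j _
    rw [hsplit j]
    have : x + j ≠ 0 := by positivity
    field_simp
  rw [sum_congr rfl hsum, sum_add_distrib, ← mul_sum,
    sum_alternating_choose_eq_fwdDiff (fun t => (x + t)⁻¹) n, fwdDiff_iter_inv n hx le_rfl,
    sum_alternating_choose_eq_fwdDiff (fun t => (p /ₘ (.X - .C (-x))).eval t) n]
  have h0 : (fwdDiff 1)^[n] (fun t => (p /ₘ (.X - .C (-x))).eval t) 0 = 0 := by
    have hd := Polynomial.natDegree_divByMonic p (Polynomial.monic_X_sub_C (-x))
    rw [Polynomial.natDegree_X_sub_C] at hd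
    rcases Nat.eq_zero_or_pos n with rfl | hn
    · have hq : p /ₘ (.X - .C (-x)) = 0 := by
        rw [Polynomial.divByMonic_eq_zero_iff (Polynomial.monic_X_sub_C (-x)),
          Polynomial.degree_X_sub_C]
        exact lt_of_le_of_lt (Polynomial.natDegree_le_iff_degree_le.mp hp) (by norm_num)
      simp only [hq]
      simp
    · exact congrFun (Polynomial.fwdDiff_iter_eq_zero_of_degree_lt (by omega)) 0
  have h1 : ((-1 : ℝ) ^ n) * (-1) ^ n = 1 := by rw [← mul_pow]; simp
  rw [h0, mul_zero, add_zero, add_zero]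
  linear_combination (p.eval (-x) * n.factorial / rising (n + 1) x) * h1

lemma rising_sub_eq_zero {i N : ℕ} (hi : i ≤ N) : rising (N + 1 - i) ((i : ℝ) - N) = 0 := by
  have h := ascPochhammer_eval_neg_coe_nat_of_lt (R := ℝ) (show N - i < N + 1 - i by omega)
  rwa [Nat.cast_sub hi, neg_sub] at h

lemma sum_jacobi_moment {A c : ℝ} (hA : 0 < A) (hc : -1 < c) {N i : ℕ} (hi : i ≤ N + 1) :
    ∑ j ∈ range (N + 1 + 1), (-1 : ℝ) ^ j * (N + 1).choose j *
        (rising j (c + (N + 1)) / rising j A * (rising (i + j) A / rising (i + j) (c + 1))) =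
      rising i (A - (c + 1 + N)) * rising (N + 1 - i) (i - N) * (N + 1).factorial /
        (rising N (c + 1) * rising (N + 1 + 1) (c + 1 + N)) := by
  have hx : 0 < c + 1 + N := by have : (0 : ℝ) ≤ N := N.cast_nonneg; linarith
  let p : Polynomial ℝ := (ascPochhammer ℝ i).comp (.X + .C A) *
    (ascPochhammer ℝ (N + 1 - i)).comp (.X + .C (c + 1 + i))
  have hdeg : p.natDegree ≤ N + 1 := by
    refine Polynomial.natDegree_mul_le.trans ?_
    rw [Polynomial.natDegree_comp, Polynomial.natDegree_comp, Polynomial.natDegree_X_add_C,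
      Polynomial.natDegree_X_add_C, ascPochhammer_natDegree, ascPochhammer_natDegree]
    omega
  have hp : ∀ t, p.eval t = rising i (t + A) * rising (N + 1 - i) (t + (c + 1 + i)) := by
    intro t
    simp [p, rising]
  have key := sum_alternating_choose_polynomial_div p (N + 1) hdeg hx
  have hterm : ∀ j ∈ range (N + 1 + 1), (-1 : ℝ) ^ j * (N + 1).choose j *
        (rising j (c + (N + 1)) / rising j A * (rising (i + j) A / rising (i + j) (c + 1))) =
      (rising N (c + 1))⁻¹ *
        ((-1 : ℝ) ^ j * (N + 1).choose j * (p.eval (j : ℝ) / (c + 1 + N + j))) := by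
    intro j _
    have h1 : rising (i + j) A = rising j A * rising i (j + A) := by
      rw [add_comm i j, rising_add, add_comm A]
    have h2 : rising (i + j) (c + 1) * rising (N + 1 - i) (j + (c + 1 + i)) =
        rising N (c + 1) * rising j (c + (N + 1)) * (c + 1 + N + j) := by
      have e1 : rising (i + j + (N + 1 - i)) (c + 1) = rising (N + (j + 1)) (c + 1) := by
        congr 1; omega
      rw [rising_add, rising_add N, rising_succ] at e1
      push_cast at e1
      rw [show (j : ℝ) + (c + 1 + i) = c + 1 + (i + j) by ring, e1,
        show c + (N + 1) = c + 1 + (N : ℝ) by ring]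
      ring
    have p1 := (rising_pos j hA).ne'
    have p2 := (rising_pos (i + j) (show 0 < c + 1 by linarith)).ne'
    have p3 := (rising_pos N (show 0 < c + 1 by linarith)).ne'
    have p4 : c + 1 + N + j ≠ 0 := by positivity
    rw [hp, h1]
    field_simp
    linear_combination (-(N + 1).choose j * rising i (j + A)) * h2
  rw [sum_congr rfl hterm, ← mul_sum, key, hp]
  have e1 : -(c + 1 + (N : ℝ)) + A = A - (c + 1 + N) := by ring
  have e2 : -(c + 1 + (N : ℝ)) + (c + 1 + i) = i - N := by ring
  rw [e1, e2, inv_mul_eq_div, div_div, mul_comm (rising N (c + 1))]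

/-- The coefficient of `y ^ j` in the monic Jacobi polynomial of degree `N` that is orthogonal for
the weight `y ^ (A - 1) * (1 - y) ^ (c - A)` on `[0, 1]`. -/
noncomputable def shiftedJacobiCoeff (A c : ℝ) (N j : ℕ) : ℝ :=
  (-1) ^ N * rising N A / rising N (c + N) *
    ((-1) ^ j * N.choose j * (rising j (c + N) / rising j A))

/-- The monic Jacobi polynomial of degree `N` that is orthogonal for
the weight `y ^ (A - 1) * (1 - y) ^ (c - A)` on `[0, 1]`. -/
noncomputable def shiftedJacobi (A c : ℝ) (N : ℕ) (y : ℝ) : ℝ :=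
  ∑ j ∈ range (N + 1), shiftedJacobiCoeff A c N j * y ^ j

/-- The squared norm of `shiftedJacobi A c N` relative to that of the constant `1`. -/
noncomputable def shiftedJacobiNorm (A c : ℝ) (N : ℕ) : ℝ :=
  rising N A * rising N (c + 1 - A) * N.factorial * rising N c /
    (rising (2 * N) c * rising (2 * N) (c + 1))

lemma shiftedJacobiCoeff_self {A c : ℝ} (hA : 0 < A) (hc : -1 < c) (N : ℕ) :
    shiftedJacobiCoeff A c N N = 1 := by
  rcases N with _ | N
  · simp [shiftedJacobiCoeff, rising]
  have h1 := (rising_pos (N + 1) hA).ne'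
  have h2 := (rising_pos (N + 1) (show 0 < c + (N + 1 : ℕ) by
    have : (0 : ℝ) ≤ N := N.cast_nonneg
    push_cast; linarith)).ne'
  have h3 : ((-1 : ℝ) ^ (N + 1)) * (-1) ^ (N + 1) = 1 := by rw [← mul_pow]; simp
  rw [shiftedJacobiCoeff, Nat.choose_self]
  field_simp
  push_cast
  linear_combination h3

lemma rising_ne_zero {c : ℝ} (hc : -1 < c) (hc0 : c ≠ 0) (N : ℕ) : rising N c ≠ 0 := by
  rcases N with _ | N
  · simp [rising]
  · rw [rising_one_add]
    exact mul_ne_zero hc0 (rising_pos N (by linarith)).ne'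

lemma sum_shiftedJacobiCoeff_moment {A c : ℝ} (hA : 0 < A) (hc : -1 < c) {N i : ℕ} (hi : i ≤ N)
    (hc0 : c ≠ 0) :
    ∑ j ∈ range (N + 1),
        shiftedJacobiCoeff A c N j * (rising (i + j) A / rising (i + j) (c + 1)) =
      if i = N then shiftedJacobiNorm A c N else 0 := by
  rcases N with _ | N
  · obtain rfl : i = 0 := by omega
    simp [shiftedJacobiCoeff, shiftedJacobiNorm, rising]
  have hsum := sum_jacobi_moment hA hc hi
  simp only [shiftedJacobiCoeff, mul_assoc _ _ (rising (i + _) A / rising (i + _) (c + 1))]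
  rw [← mul_sum]
  push_cast
  simp only [mul_assoc] at hsum ⊢
  rw [hsum]
  split_ifs with h
  · subst h
    have hx : 0 < c + 1 + N := by have : (0 : ℝ) ≤ N := N.cast_nonneg; linarith
    have e1 : rising (N + 1) (A - (c + 1 + N)) = (-1) ^ (N + 1) * rising (N + 1) (c + 1 - A) := by
      rw [← rising_reflect]; congr 1; ring
    have e2 : rising (2 * (N + 1)) c = rising (N + 1) c * rising (N + 1) (c + (N + 1)) := by
      rw [two_mul, rising_add]; push_cast; rfl
    have e3 : rising (2 * (N + 1)) (c + 1) =
        rising N (c + 1) * rising (N + 1 + 1) (c + 1 + N) := by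
      rw [show 2 * (N + 1) = N + (N + 1 + 1) by ring, rising_add]
    have h3 : ((-1 : ℝ) ^ (N + 1)) * (-1) ^ (N + 1) = 1 := by rw [← mul_pow]; simp
    have p1 := rising_ne_zero hc hc0 (N + 1)
    have p2 := (rising_pos (N + 1) (show 0 < c + (N + 1) by linarith)).ne'
    have p3 := (rising_pos N (show 0 < c + 1 by linarith)).ne'
    have p4 := (rising_pos (N + 1 + 1) hx).ne'
    have e0 (x : ℝ) : rising 0 x = 1 := by simp [rising]
    rw [shiftedJacobiNorm, e1, e2, e3, Nat.sub_self, e0]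
    field_simp
    linear_combination (rising (N + 1) A * rising (N + 1) (c + 1 - A)) * h3
  · rw [rising_sub_eq_zero (by omega)]
    simp

lemma ofReal_beta_integrand {α β x : ℝ} (hx : x ∈ Set.Ioc (0 : ℝ) 1) :
    ((x ^ (α - 1) * (1 - x) ^ (β - 1) : ℝ) : ℂ) =
      (x : ℂ) ^ ((α : ℂ) - 1) * (1 - (x : ℂ)) ^ ((β : ℂ) - 1) := by
  rw [Complex.ofReal_mul, Complex.ofReal_cpow hx.1.le, Complex.ofReal_cpow (by linarith [hx.2])]
  push_cast
  rfl

lemma integrableOn_beta {α β : ℝ} (hα : 0 < α) (hβ : 0 < β) :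
    IntegrableOn (fun x : ℝ => x ^ (α - 1) * (1 - x) ^ (β - 1)) (Set.Ioo 0 1) := by
  have h := Complex.betaIntegral_convergent (u := α) (v := β) (by simpa) (by simpa)
  rw [intervalIntegrable_iff_integrableOn_Ioc_of_le zero_le_one] at h
  have h' := (h.congr_fun (fun x hx => (ofReal_beta_integrand hx).symm) measurableSet_Ioc).re
  exact IntegrableOn.mono_set (by simpa [IntegrableOn] using h') Set.Ioo_subset_Ioc_self

lemma integral_beta {α β : ℝ} (hα : 0 < α) (hβ : 0 < β) :
    ∫ x in Set.Ioo (0 : ℝ) 1, x ^ (α - 1) * (1 - x) ^ (β - 1) =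
      ProbabilityTheory.beta α β := by
  rw [ProbabilityTheory.beta_eq_betaIntegralReal α β hα hβ, Complex.betaIntegral,
    intervalIntegral.integral_of_le zero_le_one,
    setIntegral_congr_fun measurableSet_Ioc (fun x hx => (ofReal_beta_integrand hx).symm),
    integral_complex_ofReal, Complex.ofReal_re, integral_Ioc_eq_integral_Ioo]

lemma beta_add_natCast {α β : ℝ} (hα : 0 < α) (hβ : 0 < β) (k : ℕ) :
    ProbabilityTheory.beta (α + k) β =
      rising k α / rising k (α + β) * ProbabilityTheory.beta α β := by
  have h : α + k + β = α + β + k := by ring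
  have h1 := (rising_pos k (add_pos hα hβ)).ne'
  have h2 := (Real.Gamma_pos_of_pos (add_pos hα hβ)).ne'
  rw [ProbabilityTheory.beta, ProbabilityTheory.beta, h, Gamma_add_natCast hα,
    Gamma_add_natCast (add_pos hα hβ)]
  field_simp

lemma beta_integrand_mul_pow (α β : ℝ) (k : ℕ) {x : ℝ} (hx : x ∈ Set.Ioo (0 : ℝ) 1) :
    x ^ (α + k - 1) * (1 - x) ^ (β - 1) = x ^ (α - 1) * (1 - x) ^ (β - 1) * x ^ k := by
  rw [add_sub_right_comm, Real.rpow_add_natCast hx.1.ne']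
  ring

lemma integrableOn_beta_mul_pow {α β : ℝ} (hα : 0 < α) (hβ : 0 < β) (k : ℕ) :
    IntegrableOn (fun x : ℝ => x ^ (α - 1) * (1 - x) ^ (β - 1) * x ^ k) (Set.Ioo 0 1) :=
  (integrableOn_beta (by positivity : 0 < α + k) hβ).congr_fun
    (fun _ hx => beta_integrand_mul_pow α β k hx) measurableSet_Ioo

lemma integral_beta_mul_pow {α β : ℝ} (hα : 0 < α) (hβ : 0 < β) (k : ℕ) :
    ∫ x in Set.Ioo (0 : ℝ) 1, x ^ (α - 1) * (1 - x) ^ (β - 1) * x ^ k =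
      rising k α / rising k (α + β) * ProbabilityTheory.beta α β := by
  rw [← beta_add_natCast hα hβ, ← integral_beta (by positivity : 0 < α + k) hβ]
  exact setIntegral_congr_fun measurableSet_Ioo
    (fun x hx => (beta_integrand_mul_pow α β k hx).symm)

lemma integral_beta_shiftedJacobi_mul_of_le {A c : ℝ} (hA : 0 < A) (hc : -1 < c) (hAc : A < c + 1)
    (hc0 : c ≠ 0) {N M : ℕ} (hMN : M ≤ N) :
    ∫ y in Set.Ioo (0 : ℝ) 1, y ^ (A - 1) * (1 - y) ^ (c - A) *
        (shiftedJacobi A c N y * shiftedJacobi A c M y) =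
      if N = M then shiftedJacobiNorm A c N * ProbabilityTheory.beta A (c + 1 - A) else 0 := by
  have hB : 0 < c + 1 - A := by linarith
  have hexp : ∀ y : ℝ, y ^ (A - 1) * (1 - y) ^ (c - A) *
      (shiftedJacobi A c N y * shiftedJacobi A c M y) =
      ∑ i ∈ range (M + 1), ∑ j ∈ range (N + 1),
        shiftedJacobiCoeff A c M i * shiftedJacobiCoeff A c N j *
          (y ^ (A - 1) * (1 - y) ^ (c + 1 - A - 1) * y ^ (i + j)) := by
    intro y
    rw [mul_comm (shiftedJacobi A c N y), shiftedJacobi, shiftedJacobi, sum_mul_sum, mul_sum,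
      show c + 1 - A - 1 = c - A by ring]
    refine sum_congr rfl fun i _ => ?_
    rw [mul_sum]
    refine sum_congr rfl fun j _ => ?_
    rw [pow_add]
    ring
  have hint : ∀ i j : ℕ, IntegrableOn (fun y : ℝ =>
      shiftedJacobiCoeff A c M i * shiftedJacobiCoeff A c N j *
        (y ^ (A - 1) * (1 - y) ^ (c + 1 - A - 1) * y ^ (i + j))) (Set.Ioo 0 1) :=
    fun i j => (integrableOn_beta_mul_pow hA hB (i + j)).const_mul _
  simp_rw [hexp]
  rw [integral_finsetSum _ fun i _ => integrable_finsetSum _ fun j _ => hint i j]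
  have hinner : ∀ i ∈ range (M + 1), ∫ y in Set.Ioo (0 : ℝ) 1, ∑ j ∈ range (N + 1),
        shiftedJacobiCoeff A c M i * shiftedJacobiCoeff A c N j *
          (y ^ (A - 1) * (1 - y) ^ (c + 1 - A - 1) * y ^ (i + j)) =
      shiftedJacobiCoeff A c M i * (if i = N then shiftedJacobiNorm A c N else 0) *
        ProbabilityTheory.beta A (c + 1 - A) := by
    intro i hi
    have hiN : i ≤ N := by have := mem_range.mp hi; omega
    rw [integral_finsetSum _ fun j _ => hint i j, ← sum_shiftedJacobiCoeff_moment hA hc hiN hc0,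
      mul_sum, sum_mul]
    refine sum_congr rfl fun j _ => ?_
    rw [integral_const_mul, integral_beta_mul_pow hA hB, show A + (c + 1 - A) = c + 1 by ring]
    ring
  rw [sum_congr rfl hinner]
  split_ifs with h
  · subst h
    rw [sum_range_succ, sum_eq_zero, if_pos rfl, shiftedJacobiCoeff_self hA hc]
    · ring
    · intro i hi
      rw [if_neg (mem_range.mp hi).ne]
      ring
  · refine sum_eq_zero fun i hi => ?_
    have := mem_range.mp hi
    rw [if_neg (by omega)]
    ring

lemma integral_beta_shiftedJacobi_mul {A c : ℝ} (hA : 0 < A) (hc : -1 < c) (hAc : A < c + 1)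
    (hc0 : c ≠ 0) (N M : ℕ) :
    ∫ y in Set.Ioo (0 : ℝ) 1, y ^ (A - 1) * (1 - y) ^ (c - A) *
        (shiftedJacobi A c N y * shiftedJacobi A c M y) =
      if N = M then shiftedJacobiNorm A c N * ProbabilityTheory.beta A (c + 1 - A) else 0 := by
  rcases le_total M N with hMN | hNM
  · exact integral_beta_shiftedJacobi_mul_of_le hA hc hAc hc0 hMN
  · have key := integral_beta_shiftedJacobi_mul_of_le hA hc hAc hc0 hNM
    simp_rw [mul_comm (shiftedJacobi A c N _)]
    rw [key]
    rcases eq_or_ne N M with rfl | hne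
    · rfl
    · rw [if_neg hne, if_neg hne.symm]

/-- The substitution `y = x ^ 2` for integrals of even functions over `[-1, 1]`. -/
lemma integral_abs_rpow_mul_comp_sq (a b : ℝ) (F : ℝ → ℝ) :
    ∫ x in (-1 : ℝ)..1, |x| ^ (2 * a) * (1 - x ^ 2) ^ b * F (x ^ 2) =
      ∫ y in Set.Ioo (0 : ℝ) 1, y ^ (a - 1 / 2) * (1 - y) ^ b * F y := by
  let G : ℝ → ℝ := fun x => x ^ (2 * a) * (1 - x ^ 2) ^ b * F (x ^ 2)
  have hG : ∀ x : ℝ, |x| ^ (2 * a) * (1 - x ^ 2) ^ b * F (x ^ 2) = G |x| := fun x => by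
    simp [G]
  have hind : (Set.Ioo (-1 : ℝ) 1).indicator (fun x => G |x|) =
      fun x => (Set.Iio (1 : ℝ)).indicator G |x| := by
    ext x
    simp only [Set.indicator, Set.mem_Ioo, Set.mem_Iio, abs_lt]
  have himage : (fun x : ℝ => x ^ 2) '' Set.Ioo 0 1 = Set.Ioo 0 1 := by
    ext y
    constructor
    · rintro ⟨x, ⟨h0, h1⟩, rfl⟩
      exact ⟨by positivity, by dsimp only; nlinarith⟩
    · rintro ⟨h0, h1⟩
      exact ⟨√y, ⟨Real.sqrt_pos.mpr h0, (Real.sqrt_lt' one_pos).mpr (by simpa using h1)⟩,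
        Real.sq_sqrt h0.le⟩
  have hderiv : ∀ x ∈ Set.Ioo (0 : ℝ) 1,
      HasDerivWithinAt (fun x : ℝ => x ^ 2) (2 * x) (Set.Ioo 0 1) x := fun x _ => by
    simpa using (hasDerivAt_pow 2 x).hasDerivWithinAt
  have hinj : Set.InjOn (fun x : ℝ => x ^ 2) (Set.Ioo 0 1) := fun x hx y hy h =>
    (pow_left_inj₀ hx.1.le hy.1.le two_ne_zero).mp h
  simp_rw [hG]
  rw [intervalIntegral.integral_of_le (by norm_num), integral_Ioc_eq_integral_Ioo,
    ← integral_indicator measurableSet_Ioo, hind, integral_comp_abs,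
    setIntegral_indicator measurableSet_Iio, Set.Ioi_inter_Iio]
  conv_rhs => rw [← himage]
  rw [integral_image_eq_integral_abs_deriv_smul measurableSet_Ioo hderiv hinj,
    ← integral_const_mul]
  refine setIntegral_congr_fun measurableSet_Ioo fun x hx => ?_
  have h0 := hx.1
  have hpow : x ^ (2 * a) = x * (x ^ 2) ^ (a - 1 / 2) := by
    rw [← Real.rpow_natCast x 2, ← Real.rpow_mul h0.le]
    nth_rw 2 [← Real.rpow_one x]
    rw [← Real.rpow_add h0]
    congr 1
    push_cast
    ring
  simp only [G, smul_eq_mul]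
  rw [hpow, abs_of_pos (by positivity)]
  ring

lemma integral_odd_eq_zero {f : ℝ → ℝ} (hf : ∀ x, f (-x) = -f x) (r : ℝ) :
    ∫ x in (-r)..r, f x = 0 := by
  have h := intervalIntegral.integral_comp_neg (a := -r) (b := r) f
  simp only [hf, intervalIntegral.integral_neg, neg_neg] at h
  linarith

lemma prod_neg_div_eq_rising (u v : ℝ) (k : ℕ) :
    ∏ i ∈ range k, (-(2 * (u + i)) / (2 * (v + i))) = (-1) ^ k * (rising k u / rising k v) := by
  rw [rising_eq_prod, rising_eq_prod, ← prod_div_distrib, ← card_range k, ← prod_const,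
    card_range, ← prod_mul_distrib]
  refine prod_congr rfl fun i _ => ?_
  rw [neg_div, mul_div_mul_left _ _ two_ne_zero]
  ring

lemma prod_div_neg_eq_rising (u v : ℝ) (k : ℕ) :
    ∏ i ∈ range k, (2 * (v + i) / -(2 * (u + i))) = (-1) ^ k * (rising k v / rising k u) := by
  rw [← prod_neg_div_eq_rising]
  refine prod_congr rfl fun i _ => ?_
  rw [div_neg, neg_div]

lemma shiftedJacobi_eq_sum_reflect (A c : ℝ) (N : ℕ) (y : ℝ) :
    shiftedJacobi A c N y =
      (-1) ^ N * (rising N A / rising N (c + N)) *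
        ∑ k ∈ range (N + 1), N.choose k *
          ((-1) ^ (N - k) * (rising (N - k) (c + N) / rising (N - k) A)) * y ^ (N - k) := by
  rw [shiftedJacobi, ← sum_flip (fun j => shiftedJacobiCoeff A c N j * y ^ j), mul_sum]
  refine sum_congr rfl fun k hk => ?_
  rw [shiftedJacobiCoeff, Nat.choose_symm (Nat.lt_succ_iff.mp (mem_range.mp hk))]
  ring

lemma Sbar_even (a b : ℝ) (N : ℕ) (x : ℝ) :
    Sbar (-1) 1 (-2 * a - 2 * b - 2) (2 * a) (2 * N) x =
      shiftedJacobi (a + 1 / 2) (a + b + 1 / 2) N (x ^ 2) := by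
  have hsign : (-1 : ℝ) ^ (2 * N + 1) = -1 := by simp [pow_succ, pow_mul]
  have hdiv : 2 * N / 2 = N := by omega
  have hnum : ∀ i : ℝ, (2 * i + -1 + 2 * (N : ℝ)) * -1 + (-2 * a - 2 * b - 2) =
      -(2 * (a + b + 1 / 2 + N + i)) := fun i => by ring
  have hden : ∀ i : ℝ, (2 * i + -1 + 2) * 1 + 2 * a = 2 * (a + 1 / 2 + i) := fun i => by ring
  rw [shiftedJacobi_eq_sum_reflect, Sbar, S, hdiv, hsign]
  simp_rw [hnum, hden, prod_neg_div_eq_rising, prod_div_neg_eq_rising]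
  simp_rw [← pow_mul, Nat.mul_sub]

lemma Sbar_odd (a b : ℝ) (N : ℕ) (x : ℝ) :
    Sbar (-1) 1 (-2 * a - 2 * b - 2) (2 * a) (2 * N + 1) x =
      x * shiftedJacobi (a + 3 / 2) (a + b + 3 / 2) N (x ^ 2) := by
  have hsign : (-1 : ℝ) ^ (2 * N + 1 + 1) = 1 := by simp [pow_succ, pow_mul]
  have hdiv : (2 * N + 1) / 2 = N := by omega
  have hnum : ∀ i : ℝ, (2 * i + 1 + 2 * (N : ℝ)) * -1 + (-2 * a - 2 * b - 2) =
      -(2 * (a + b + 3 / 2 + N + i)) := fun i => by ring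
  have hden : ∀ i : ℝ, (2 * i + 1 + 2) * 1 + 2 * a = 2 * (a + 3 / 2 + i) := fun i => by ring
  rw [shiftedJacobi_eq_sum_reflect, Sbar, S, hdiv, hsign]
  simp_rw [hnum, hden, prod_neg_div_eq_rising, prod_div_neg_eq_rising]
  rw [mul_left_comm x, mul_sum _ _ x]
  refine congrArg _ (sum_congr rfl fun k hk => ?_)
  have hk : k ≤ N := Nat.lt_succ_iff.mp (mem_range.mp hk)
  rw [← pow_mul, show 2 * N + 1 - 2 * k = 2 * (N - k) + 1 by omega, pow_succ]
  ring

/-- The coefficient `γ` in the three-term recurrence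
`S̄ (i + 2) = x * S̄ (i + 1) + γ * S̄ i` of the monic generalized ultraspherical polynomials. -/
noncomputable def recurrenceCoeff (a b : ℝ) (i : ℕ) : ℝ :=
  -((((i : ℝ) + 1) + (1 - (-1 : ℝ) ^ (i + 1)) * a)
      * (((i : ℝ) + 1) + (1 - (-1 : ℝ) ^ (i + 1)) * a + 2 * b)) /
    ((2 * ((i : ℝ) + 1) + 2 * a + 2 * b - 1)
      * (2 * ((i : ℝ) + 1) + 2 * a + 2 * b + 1))

lemma recurrenceCoeff_even (a b : ℝ) (l : ℕ) :
    recurrenceCoeff a b (2 * l) =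
      -((l + (a + 1 / 2)) * (l + (a + b + 1 / 2))) /
        ((2 * l + (a + b + 1 / 2)) * (2 * l + (a + b + 1 / 2) + 1)) := by
  have hsign : (-1 : ℝ) ^ (2 * l + 1) = -1 := by simp [pow_succ, pow_mul]
  rw [recurrenceCoeff, hsign]
  conv_rhs => rw [← mul_div_mul_left _ _ (four_ne_zero (α := ℝ))]
  push_cast
  congr 1 <;> ring

lemma recurrenceCoeff_odd (a b : ℝ) (l : ℕ) :
    recurrenceCoeff a b (2 * l + 1) =
      -((l + 1) * (l + (b + 1))) /
        ((2 * l + (a + b + 1 / 2) + 1) * (2 * l + (a + b + 1 / 2) + 2)) := by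
  have hsign : (-1 : ℝ) ^ (2 * l + 1 + 1) = 1 := by simp [pow_succ, pow_mul]
  rw [recurrenceCoeff, hsign]
  conv_rhs => rw [← mul_div_mul_left _ _ (four_ne_zero (α := ℝ))]
  push_cast
  congr 1 <;> ring

lemma shiftedJacobiNorm_succ (A c : ℝ) (N : ℕ) :
    shiftedJacobiNorm A c (N + 1) = shiftedJacobiNorm A c N *
      ((N + A) * (N + c) * ((N + 1) * (N + (c + 1 - A))) /
        ((2 * N + c) * (2 * N + c + 1) * ((2 * N + c + 1) * (2 * N + c + 2)))) := by
  rw [shiftedJacobiNorm, shiftedJacobiNorm, show 2 * (N + 1) = 2 * N + 1 + 1 by ring]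
  simp only [rising_succ, Nat.factorial_succ]
  push_cast
  rw [div_mul_div_comm]
  congr 1 <;> ring

lemma prod_recurrenceCoeff_even (a b : ℝ) (N : ℕ) :
    ∏ i ∈ range (2 * N), recurrenceCoeff a b i =
      shiftedJacobiNorm (a + 1 / 2) (a + b + 1 / 2) N := by
  induction N with
  | zero => simp [shiftedJacobiNorm, rising]
  | succ N ih =>
    rw [show 2 * (N + 1) = 2 * N + 1 + 1 by ring, prod_range_succ, prod_range_succ,
      ih, recurrenceCoeff_even, recurrenceCoeff_odd, shiftedJacobiNorm_succ,
      mul_assoc, div_mul_div_comm, show a + b + 1 / 2 + 1 - (a + 1 / 2) = b + 1 by ring]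
    congr 2
    ring

lemma prod_recurrenceCoeff_odd {a b : ℝ} (hc0 : a + b + 1 / 2 ≠ 0)
    (N : ℕ) :
    ∏ i ∈ range (2 * N + 1), recurrenceCoeff a b i =
      -((a + 1 / 2) / (a + b + 3 / 2)) * shiftedJacobiNorm (a + 3 / 2) (a + b + 3 / 2) N := by
  induction N with
  | zero =>
    have h := recurrenceCoeff_even a b 0
    simp only [mul_zero, Nat.cast_zero, zero_add,
      show a + b + 1 / 2 + 1 = a + b + 3 / 2 by ring] at h
    rw [mul_zero, zero_add, prod_range_one, h, mul_comm (a + b + 1 / 2), neg_div,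
      mul_div_mul_right _ _ hc0]
    simp [shiftedJacobiNorm, rising]
  | succ N ih =>
    rw [show 2 * (N + 1) + 1 = 2 * N + 1 + 1 + 1 by ring, prod_range_succ, prod_range_succ,
      ih, recurrenceCoeff_odd, show 2 * N + 1 + 1 = 2 * (N + 1) by ring, recurrenceCoeff_even,
      shiftedJacobiNorm_succ, mul_assoc, div_mul_div_comm,
      show a + b + 3 / 2 + 1 - (a + 3 / 2) = b + 1 by ring, mul_assoc (-_)]
    push_cast
    congr 3 <;> ring

/-- Orthogonality relation of the monic generalized ultraspherical polynomials
`S̄_n(−1,1,−2a−2b−2,2a;·)` with respect to the weight `|x|^{2a}(1−x²)^b` on `[−1,1]`. -/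
theorem GUP_orthogonality (a b : ℝ) (ha : -(1 / 2 : ℝ) < a) (hb : -1 < b) (n m : ℕ)
    (hden : ∀ j : ℤ, Odd j → 1 ≤ |j| → |j| ≤ 2 * (max n m : ℤ) + 1 →
      2 * (a + b) + (j : ℝ) ≠ 0) :
    ∫ x in (-1 : ℝ)..1,
        |x| ^ (2 * a) * (1 - x ^ 2) ^ b *
          Sbar (-1) 1 (-2 * a - 2 * b - 2) (2 * a) n x *
          Sbar (-1) 1 (-2 * a - 2 * b - 2) (2 * a) m x =
      (if n = m then (1 : ℝ) else 0) * (-1 : ℝ) ^ n *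
        (∏ i ∈ Finset.range n,
          -((((i : ℝ) + 1) + (1 - (-1 : ℝ) ^ (i + 1)) * a)
              * (((i : ℝ) + 1) + (1 - (-1 : ℝ) ^ (i + 1)) * a + 2 * b)) /
            ((2 * ((i : ℝ) + 1) + 2 * a + 2 * b - 1)
              * (2 * ((i : ℝ) + 1) + 2 * a + 2 * b + 1))) *
        (Real.Gamma (a + 1 / 2) * Real.Gamma (b + 1) / Real.Gamma (a + b + 3 / 2)) := by
  have hc : -1 < a + b + 1 / 2 := by linarith
  have hc0 : a + b + 1 / 2 ≠ 0 := fun h =>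
    hden 1 odd_one (by simp) (by rw [abs_one]; exact le_add_of_nonneg_left (by positivity))
      (by push_cast; linarith)
  have hbeta : Real.Gamma (a + 1 / 2) * Real.Gamma (b + 1) / Real.Gamma (a + b + 3 / 2) =
      ProbabilityTheory.beta (a + 1 / 2) (b + 1) := by
    rw [ProbabilityTheory.beta, show a + 1 / 2 + (b + 1) = a + b + 3 / 2 by ring]
  change _ = _ * (∏ i ∈ range n, recurrenceCoeff a b i) * _
  rw [hbeta]
  rcases n.even_or_odd' with ⟨N, rfl | rfl⟩ <;> rcases m.even_or_odd' with ⟨M, rfl | rfl⟩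
  · have hb' : a + b + 1 / 2 + 1 - (a + 1 / 2) = b + 1 := by ring
    have key := integral_beta_shiftedJacobi_mul (A := a + 1 / 2) (c := a + b + 1 / 2) 
      (by linarith) hc (by linarith) hc0 N M
    rw [show a + 1 / 2 - 1 = a - 1 / 2 by ring, show a + b + 1 / 2 - (a + 1 / 2) = b by ring,
      ← integral_abs_rpow_mul_comp_sq, hb'] at key
    simp_rw [Sbar_even, mul_assoc (_ * _) (shiftedJacobi _ _ _ _), key,
      prod_recurrenceCoeff_even]
    simp
  · rw [if_neg (by omega), zero_mul, zero_mul, zero_mul]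
    refine integral_odd_eq_zero (fun x => ?_) 1
    simp only [Sbar_even, Sbar_odd, abs_neg, neg_sq]
    ring
  · rw [if_neg (by omega), zero_mul, zero_mul, zero_mul]
    refine integral_odd_eq_zero (fun x => ?_) 1
    simp only [Sbar_even, Sbar_odd, abs_neg, neg_sq]
    ring
  · have key := integral_beta_shiftedJacobi_mul (A := a + 3 / 2) (c := a + b + 3 / 2) 
      (by linarith) (by linarith) (by linarith) (by linarith) N M
    have hshift := integral_abs_rpow_mul_comp_sq a b fun y =>
      y * (shiftedJacobi (a + 3 / 2) (a + b + 3 / 2) N y *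
        shiftedJacobi (a + 3 / 2) (a + b + 3 / 2) M y)
    have hweight : ∀ y ∈ Set.Ioo (0 : ℝ) 1, ∀ t : ℝ,
        y ^ (a - 1 / 2) * (1 - y) ^ b * (y * t) =
        y ^ (a + 3 / 2 - 1) * (1 - y) ^ (a + b + 3 / 2 - (a + 3 / 2)) * t := fun y hy t => by
      rw [show a + 3 / 2 - 1 = a - 1 / 2 + 1 by ring, Real.rpow_add_one hy.1.ne',
        show a + b + 3 / 2 - (a + 3 / 2) = b by ring]
      ring
    rw [setIntegral_congr_fun measurableSet_Ioo fun y hy => hweight y hy _, key,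
      show a + b + 3 / 2 + 1 - (a + 3 / 2) = b + 1 by ring] at hshift
    have hbeta' : ProbabilityTheory.beta (a + 3 / 2) (b + 1) =
        (a + 1 / 2) / (a + b + 3 / 2) * ProbabilityTheory.beta (a + 1 / 2) (b + 1) := by
      have h := beta_add_natCast (α := a + 1 / 2) (β := b + 1) (by linarith) (by linarith) 1
      rw [Nat.cast_one, show a + 1 / 2 + 1 = a + 3 / 2 by ring,
        show a + 1 / 2 + (b + 1) = a + b + 3 / 2 by ring] at h
      simpa [rising] using h
    have hintegrand : ∀ x : ℝ, |x| ^ (2 * a) * (1 - x ^ 2) ^ b *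
          Sbar (-1) 1 (-2 * a - 2 * b - 2) (2 * a) (2 * N + 1) x *
          Sbar (-1) 1 (-2 * a - 2 * b - 2) (2 * a) (2 * M + 1) x =
        |x| ^ (2 * a) * (1 - x ^ 2) ^ b * (x ^ 2 *
          (shiftedJacobi (a + 3 / 2) (a + b + 3 / 2) N (x ^ 2) *
            shiftedJacobi (a + 3 / 2) (a + b + 3 / 2) M (x ^ 2))) := fun x => by
      rw [Sbar_odd, Sbar_odd]
      ring
    simp_rw [hintegrand]
    rw [hshift, prod_recurrenceCoeff_odd hc0, hbeta']
    rcases eq_or_ne N M with rfl | hne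
    · simp [pow_succ, pow_mul]
      ring
    · simp [hne]
end

section
/- Let a, b be real numbers with a < 1/2 and b > 0, and let n, m be natural numbers with n + m < 2(a + b) − 1. Assume 2(a+b) − j ≠ 0 for every odd integer j with 1 ≤ |j| ≤ 2·max(n,m) + 1. Then, with the initial vector (p,q,r,s) = (1, 1, −2a−2b+2, −2a), ∫_{−∞}^{∞} |x|^{−2a} (1 + x²)^{−b} · S̄_n(1,1,−2a−2b+2,−2a;x) · S̄_m(1,1,−2a−2b+2,−2a;x) dx = δ_{n,m} · (−1)^n · (∏_{i=1}^{n} [ (i − (1−(−1)^i)a)(i − (1−(−1)^i)a − 2b) / ((2i − 2a − 2b + 1)(2i − 2a − 2b − 1)) ]) · Γ(b + a − 1/2)Γ(1/2 − a)/Γ(b), where δ_{n,m} is 1 if n = m and 0 otherwise. In particular, the finite family {S̄_n(1,1,−2a−2b+2,−2a;·)}_{n=0}^{N} with N ≤ a + b − 1/2 is orthogonal with respect to the weight |x|^{−2a}(1+x²)^{−b} on (−∞,∞). -/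
open Finset Real MeasureTheory

theorem sum_neg_one_pow_choose_mul_eval_eq_zero {N : ℕ} {P : Polynomial ℝ} (hP : P.natDegree < N) :
    ∑ l ∈ range (N + 1), (-1 : ℝ) ^ (N - l) * (N.choose l : ℝ) * P.eval (l : ℝ) = 0 := by
  have h := congrFun (Polynomial.fwdDiff_iter_eq_zero_of_degree_lt hP) 0
  rw [fwdDiff_iter_eq_sum_shift] at h
  simpa using h

theorem sum_neg_one_pow_choose_div_sub {γ : ℝ} {N : ℕ} (hγ : (N : ℝ) < γ) :
    ∑ l ∈ range (N + 1), (-1 : ℝ) ^ (N - l) * (N.choose l : ℝ) * (1 / (γ - l)) =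
      (N.factorial : ℝ) / ∏ i ∈ range (N + 1), (γ - i) := by
  have key : ∀ (N y : ℕ), (N : ℝ) + y < γ →
      (fwdDiff 1)^[N] (fun l : ℕ => 1 / (γ - l)) y =
        (N.factorial : ℝ) / ∏ i ∈ range (N + 1), (γ - y - i) := by
    intro N
    induction N with
    | zero => intro y _; simp
    | succ N ih =>
      intro y hy
      push_cast at hy
      rw [Function.iterate_succ_apply', fwdDiff, ih _ (by push_cast; linarith),
        ih _ (by linarith), prod_range_succ, prod_range_succ' (fun i : ℕ => γ - y - i) N,
        prod_range_succ (fun i : ℕ => γ - y - i) (N + 1),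
        prod_range_succ' (fun i : ℕ => γ - y - i) N, Nat.factorial_succ]
      have hprod : ∏ i ∈ range N, (γ - ((y + 1 : ℕ) : ℝ) - i) =
          ∏ i ∈ range N, (γ - y - ((i + 1 : ℕ) : ℝ)) :=
        prod_congr rfl fun i _ => by push_cast; ring
      rw [hprod]
      have hne : ∏ i ∈ range N, (γ - y - ((i + 1 : ℕ) : ℝ)) ≠ 0 := by
        refine prod_ne_zero_iff.2 fun i hi => ?_
        have : (i : ℝ) < N := by exact_mod_cast mem_range.1 hi
        push_cast
        linarith
      have h1 : γ - y - 1 - N ≠ 0 := by linarith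
      have h2 : γ - y ≠ 0 := by have : (0:ℝ) ≤ N := N.cast_nonneg; linarith
      have h1' : γ - (y + 1) - N ≠ 0 := by linarith
      have h1'' : γ - y - (N + 1) ≠ 0 := by linarith
      push_cast
      rw [sub_zero]
      field_simp
      ring
  have h := key N 0 (by simpa using hγ)
  rw [fwdDiff_iter_eq_sum_shift] at h
  simpa using h

theorem sum_neg_one_pow_choose_mul_eval_div_sub {γ : ℝ} {N : ℕ} (hγ : (N : ℝ) < γ)
    {P : Polynomial ℝ} (hP : P.natDegree ≤ N) :
    ∑ l ∈ range (N + 1), (-1 : ℝ) ^ (N - l) * (N.choose l : ℝ) * (P.eval (l : ℝ) / (γ - l)) =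
      P.eval γ * ((N.factorial : ℝ) / ∏ i ∈ range (N + 1), (γ - i)) := by
  set Q := P.divByMonic (Polynomial.X - Polynomial.C γ) with hQ
  have hPQ : ∀ x : ℝ, P.eval x = P.eval γ + (x - γ) * Q.eval x := by
    intro x
    conv_lhs => rw [← Polynomial.modByMonic_add_div P (Polynomial.X - Polynomial.C γ)]
    simp [Polynomial.modByMonic_X_sub_C_eq_C_eval, hQ]
  have hQ0 : ∑ l ∈ range (N + 1), (-1 : ℝ) ^ (N - l) * (N.choose l : ℝ) * Q.eval (l : ℝ) = 0 := by
    by_cases h0 : Q = 0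
    · simp [h0]
    · apply sum_neg_one_pow_choose_mul_eval_eq_zero
      have hdeg : Q.natDegree = P.natDegree - 1 := by
        rw [hQ, Polynomial.natDegree_divByMonic P (Polynomial.monic_X_sub_C γ),
          Polynomial.natDegree_X_sub_C]
      have : P.natDegree ≠ 0 := by
        intro hz
        apply h0
        rw [hQ, Polynomial.divByMonic_eq_zero_iff (Polynomial.monic_X_sub_C γ),
          Polynomial.degree_X_sub_C]
        exact lt_of_le_of_lt Polynomial.degree_le_natDegree (by simp [hz])
      omega
  rw [← sum_neg_one_pow_choose_div_sub hγ, mul_sum, ← sub_eq_zero, ← sum_sub_distrib]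
  rw [← neg_eq_zero, ← sum_neg_distrib, ← hQ0]
  refine sum_congr rfl fun l hl => ?_
  have hl' : (l : ℝ) ≤ N := by exact_mod_cast Nat.lt_succ_iff.1 (mem_range.1 hl)
  have hne : γ - l ≠ 0 := by linarith
  rw [hPQ l]
  field_simp
  ring

theorem Gamma_add_natCast_s9 {x : ℝ} (hx : 0 < x) (n : ℕ) :
    Gamma (x + n) = Gamma x * ∏ i ∈ range n, (x + i) := by
  induction n with
  | zero => simp
  | succ n ih =>
    rw [prod_range_succ, ← mul_assoc, ← ih, Nat.cast_succ, ← add_assoc,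
      Real.Gamma_add_one (by positivity), mul_comm]

theorem prod_sub_mul_Gamma {γ : ℝ} {k l : ℕ} (h0 : 0 < γ) (h : (l : ℝ) < γ + k + 1) :
    (∏ i ∈ range l, (γ - i)) * Gamma (γ - l + k + 1) =
      Gamma (γ + 1) * ∏ i ∈ range k, (γ - l + 1 + i) := by
  induction l with
  | zero =>
    have := Gamma_add_natCast_s9 (x := γ + 1) (by linarith) k
    simp only [range_zero, prod_empty, Nat.cast_zero, sub_zero, one_mul]
    rw [← this]
    congr 1
    ring
  | succ l ih =>
    push_cast at h ⊢
    have ih' := ih (by linarith)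
    have hpos : 0 < γ - (l + 1) + k + 1 := by linarith
    have hG : Gamma (γ - l + k + 1) = (γ - (l + 1) + k + 1) * Gamma (γ - (l + 1) + k + 1) := by
      rw [← Real.Gamma_add_one hpos.ne']
      congr 1
      ring
    have hP : (∏ i ∈ range k, (γ - (l + 1) + 1 + i)) * (γ - (l + 1) + k + 1) =
        (γ - l) * ∏ i ∈ range k, (γ - l + 1 + i) := by
      have h1 := prod_range_succ (fun i : ℕ => γ - (l + 1) + 1 + (i : ℝ)) k
      rw [prod_range_succ'] at h1
      rw [show γ - (l + 1) + k + 1 = γ - (l + 1) + 1 + k by ring, ← h1]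
      push_cast
      rw [mul_comm]
      congr 1
      · ring
      · exact prod_congr rfl fun i _ => by ring
    rw [hG] at ih'
    rw [prod_range_succ]
    apply mul_right_cancel₀ hpos.ne'
    rw [mul_assoc (Gamma (γ + 1)), hP]
    linear_combination (γ - l) * ih'

/-- The ratios of ascending factorials `(-γ)_l / (α)_l`. -/
noncomputable def pochRatio (α γ : ℝ) (l : ℕ) : ℝ :=
  ∏ i ∈ range l, ((i : ℝ) - γ) / ((i : ℝ) + α)

theorem pochRatio_mul_Gamma {α : ℝ} (hα : 0 < α) (γ : ℝ) (l j : ℕ) :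
    pochRatio α γ l * Gamma (α + (l + j)) =
      (-1) ^ l * (∏ i ∈ range l, (γ - i)) * Gamma α * ∏ i ∈ range j, (α + l + i) := by
  have h1 := Gamma_add_natCast_s9 hα l
  have h2 := Gamma_add_natCast_s9 (x := α + l) (by positivity) j
  rw [← add_assoc, h2, h1, pochRatio, prod_div_distrib]
  have hne : ∏ i ∈ range l, ((i : ℝ) + α) ≠ 0 :=
    prod_ne_zero_iff.2 fun i _ => by positivity
  have h3 : ∏ i ∈ range l, ((i : ℝ) - γ) = (-1) ^ l * ∏ i ∈ range l, (γ - i) := by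
    rw [← card_range l, ← prod_const, card_range, ← prod_mul_distrib]
    exact prod_congr rfl fun i _ => by ring
  have h4 : ∏ i ∈ range l, (α + (i : ℝ)) = ∏ i ∈ range l, ((i : ℝ) + α) :=
    prod_congr rfl fun i _ => by ring
  rw [h3, h4]
  field_simp

theorem neg_one_pow_eq_mul_sub {N l : ℕ} (h : l ≤ N) :
    (-1 : ℝ) ^ l = (-1) ^ N * (-1) ^ (N - l) := by
  obtain ⟨k, rfl⟩ := Nat.exists_eq_add_of_le h
  rw [Nat.add_sub_cancel_left, pow_add, mul_assoc, ← pow_add, ← two_mul]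
  simp

theorem natDegree_prod_le_of_natDegree_le_one (k : ℕ) (f : ℕ → Polynomial ℝ)
    (hf : ∀ i, (f i).natDegree ≤ 1) :
    (∏ i ∈ range k, f i).natDegree ≤ k := by
  refine (Polynomial.natDegree_prod_le _ _).trans ((sum_le_sum fun i _ => hf i).trans ?_)
  simp

theorem sum_choose_mul_pochRatio_mul_Gamma_eq_zero {α γ : ℝ} {N j : ℕ} (hα : 0 < α) (hj : j < N)
    (hγ : (j : ℝ) < γ) :
    ∑ l ∈ range (N + 1), (N.choose l : ℝ) * pochRatio α γ l *
      (Gamma (α + (l + j)) * Gamma (γ + N - (l + j))) = 0 := by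
  obtain ⟨k, rfl⟩ := Nat.exists_eq_add_of_lt hj
  have h0 : 0 < γ := lt_of_le_of_lt j.cast_nonneg hγ
  set P : Polynomial ℝ := (∏ i ∈ range j, (Polynomial.X + Polynomial.C (α + i))) *
    ∏ i ∈ range k, (Polynomial.C (γ + 1 + i) - Polynomial.X) with hPdef
  have hP : P.natDegree < j + k + 1 := by
    refine lt_of_le_of_lt (Polynomial.natDegree_mul_le.trans (add_le_add
      (natDegree_prod_le_of_natDegree_le_one _ _ fun i => ?_)
      (natDegree_prod_le_of_natDegree_le_one _ _ fun i => ?_)))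
      (Nat.lt_succ_self _)
    · compute_degree
    · compute_degree
  have hz := sum_neg_one_pow_choose_mul_eval_eq_zero hP
  rw [← mul_zero ((-1) ^ (j + k + 1) * Gamma α * Gamma (γ + 1)), ← hz, mul_sum]
  refine sum_congr rfl fun l hl => ?_
  have hl' : l ≤ j + k + 1 := Nat.lt_succ_iff.1 (mem_range.1 hl)
  have hlr : (l : ℝ) ≤ j + k + 1 := by exact_mod_cast hl'
  have h1 := pochRatio_mul_Gamma hα γ l j
  have h2 := prod_sub_mul_Gamma (k := k) (l := l) h0 (by linarith)
  have hev : P.eval (l : ℝ) = (∏ i ∈ range j, (α + l + i)) * ∏ i ∈ range k, (γ - l + 1 + i) := by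
    rw [hPdef, Polynomial.eval_mul, Polynomial.eval_prod, Polynomial.eval_prod]
    congr 1 <;> refine prod_congr rfl fun i _ => ?_ <;> simp <;> ring
  rw [show γ + ((j + k + 1 : ℕ) : ℝ) - (l + j) = γ - l + k + 1 by push_cast; ring, hev]
  have h3 := neg_one_pow_eq_mul_sub hl'
  calc _ = ((j + k + 1).choose l : ℝ) * (pochRatio α γ l * Gamma (α + (l + j))) *
        Gamma (γ - l + k + 1) := by ring
    _ = ((j + k + 1).choose l : ℝ) * (-1) ^ l * Gamma α * (∏ i ∈ range j, (α + l + i)) *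
        ((∏ i ∈ range l, (γ - i)) * Gamma (γ - l + k + 1)) := by rw [h1]; ring
    _ = _ := by rw [h2, h3]; ring

theorem sum_choose_mul_pochRatio_mul_Gamma_self {α γ : ℝ} {N : ℕ} (hα : 0 < α)
    (hγ : (N : ℝ) < γ) :
    ∑ l ∈ range (N + 1), (N.choose l : ℝ) * pochRatio α γ l *
      (Gamma (α + (l + N)) * Gamma (γ + N - (l + N))) =
    (-1) ^ N * Gamma α * Gamma (γ + 1) * ((∏ i ∈ range N, (α + γ + i)) *
      ((N.factorial : ℝ) / ∏ i ∈ range (N + 1), (γ - i))) := by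
  have h0 : 0 < γ := lt_of_le_of_lt N.cast_nonneg hγ
  set P : Polynomial ℝ := ∏ i ∈ range N, (Polynomial.X + Polynomial.C (α + i)) with hPdef
  have hP : P.natDegree ≤ N := natDegree_prod_le_of_natDegree_le_one _ _ fun i => by compute_degree
  have hev : ∀ x, P.eval x = ∏ i ∈ range N, (α + x + i) := by
    intro x
    rw [hPdef, Polynomial.eval_prod]
    refine prod_congr rfl fun i _ => ?_
    simp
    ring
  have hz := sum_neg_one_pow_choose_mul_eval_div_sub hγ hP
  rw [← hev, ← hz, mul_sum]
  refine sum_congr rfl fun l hl => ?_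
  have hl' : l ≤ N := Nat.lt_succ_iff.1 (mem_range.1 hl)
  have hlr : (l : ℝ) ≤ N := by exact_mod_cast hl'
  have hpos : 0 < γ - l := by linarith
  have h1 := pochRatio_mul_Gamma hα γ l N
  have h2 := prod_sub_mul_Gamma (k := 0) (l := l) h0 (by simp; linarith)
  simp only [Nat.cast_zero, add_zero, range_zero, prod_empty, mul_one] at h2
  rw [Real.Gamma_add_one hpos.ne'] at h2
  have h3 := neg_one_pow_eq_mul_sub hl'
  rw [show γ + (N : ℝ) - (l + N) = γ - l by ring, hev]
  calc _ = (N.choose l : ℝ) * (pochRatio α γ l * Gamma (α + (l + N))) *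
        Gamma (γ - l) := by ring
    _ = (N.choose l : ℝ) * (-1) ^ l * Gamma α * (∏ i ∈ range N, (α + l + i)) *
        ((∏ i ∈ range l, (γ - i)) * ((γ - l) * Gamma (γ - l))) / (γ - l) := by
          rw [h1]; field_simp
    _ = _ := by rw [h2, h3]; ring

theorem integrableOn_Ioo_rpow_mul_one_sub_rpow {u v : ℝ} (hu : 0 < u) (hv : 0 < v) :
    IntegrableOn (fun x : ℝ => x ^ (u - 1) * (1 - x) ^ (v - 1)) (Set.Ioo 0 1) ∧
    ∫ x in Set.Ioo (0 : ℝ) 1, x ^ (u - 1) * (1 - x) ^ (v - 1) =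
      Gamma u * Gamma v / Gamma (u + v) := by
  have hc := Complex.betaIntegral_convergent (u := u) (v := v) (by simpa) (by simpa)
  rw [intervalIntegrable_iff_integrableOn_Ioo_of_le zero_le_one] at hc
  have heq : Set.EqOn (fun x : ℝ => (x : ℂ) ^ ((u : ℂ) - 1) * (1 - (x : ℂ)) ^ ((v : ℂ) - 1))
      (fun x : ℝ => ((x ^ (u - 1) * (1 - x) ^ (v - 1) : ℝ) : ℂ)) (Set.Ioo 0 1) := by
    intro x hx
    have h1 := Complex.ofReal_cpow hx.1.le (u - 1)
    have h2 := Complex.ofReal_cpow (sub_pos.2 hx.2).le (v - 1)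
    push_cast at h1 h2 ⊢
    simp only [h1, h2]
  rw [integrableOn_congr_fun heq measurableSet_Ioo] at hc
  refine ⟨by simpa only [RCLike.re_eq_complex_re, Complex.ofReal_re] using! hc.re, ?_⟩
  have hb := ProbabilityTheory.beta_eq_betaIntegralReal u v hu hv
  rw [Complex.betaIntegral, intervalIntegral.integral_of_le zero_le_one,
    ← integral_Ioc_eq_integral_Ioo.symm, setIntegral_congr_fun measurableSet_Ioo heq,
    integral_complex_ofReal, Complex.ofReal_re] at hb
  exact hb.symm

theorem image_sq_div_one_add_sq_Ioi :
    (fun x : ℝ => x ^ 2 / (1 + x ^ 2)) '' Set.Ioi 0 = Set.Ioo 0 1 := by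
  ext y
  constructor
  · rintro ⟨x, hx, rfl⟩
    have hx : 0 < x := hx
    refine ⟨by positivity, ?_⟩
    rw [div_lt_one (by positivity)]
    linarith
  · rintro ⟨h0, h1⟩
    have h2 : 0 < 1 - y := sub_pos.2 h1
    refine ⟨√(y / (1 - y)), Real.sqrt_pos.2 (by positivity), ?_⟩
    simp only
    rw [Real.sq_sqrt (by positivity)]
    field_simp
    ring

theorem injOn_sq_div_one_add_sq_Ioi :
    Set.InjOn (fun x : ℝ => x ^ 2 / (1 + x ^ 2)) (Set.Ioi 0) := by
  intro x hx y hy h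
  have hx : 0 < x := hx
  have hy : 0 < y := hy
  simp only at h
  rw [div_eq_div_iff (by positivity) (by positivity)] at h
  exact (sq_eq_sq₀ hx.le hy.le).1 (by linarith)

theorem integrableOn_Ioi_rpow_mul_one_add_sq_rpow {u v : ℝ} (hu : 0 < u) (hv : 0 < v) :
    IntegrableOn (fun x : ℝ => x ^ (2 * u - 1) * (1 + x ^ 2) ^ (-(u + v))) (Set.Ioi 0) ∧
    ∫ x in Set.Ioi (0 : ℝ), x ^ (2 * u - 1) * (1 + x ^ 2) ^ (-(u + v)) =
      Gamma u * Gamma v / Gamma (u + v) / 2 := by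
  obtain ⟨hi, he⟩ := integrableOn_Ioo_rpow_mul_one_sub_rpow hu hv
  have hder : ∀ x ∈ Set.Ioi (0 : ℝ), HasDerivWithinAt (fun x : ℝ => x ^ 2 / (1 + x ^ 2))
      (2 * x / (1 + x ^ 2) ^ 2) (Set.Ioi 0) x := by
    intro x _
    have h1 : HasDerivAt (fun x : ℝ => x ^ 2) (2 * x) x := by simpa using hasDerivAt_pow 2 x
    have := h1.fun_div (h1.const_add 1) (by positivity)
    exact this.hasDerivWithinAt.congr_deriv (by ring)
  rw [← image_sq_div_one_add_sq_Ioi] at hi he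
  rw [integrableOn_image_iff_integrableOn_abs_deriv_smul measurableSet_Ioi hder
    injOn_sq_div_one_add_sq_Ioi] at hi
  rw [integral_image_eq_integral_abs_deriv_smul measurableSet_Ioi hder
    injOn_sq_div_one_add_sq_Ioi] at he
  have heq : Set.EqOn (fun x : ℝ => |2 * x / (1 + x ^ 2) ^ 2| • ((x ^ 2 / (1 + x ^ 2)) ^ (u - 1) *
      (1 - x ^ 2 / (1 + x ^ 2)) ^ (v - 1)))
      (fun x => 2 * (x ^ (2 * u - 1) * (1 + x ^ 2) ^ (-(u + v)))) (Set.Ioi 0) := by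
    intro x hx
    have hx : 0 < x := hx
    have hd : 0 < 1 + x ^ 2 := by positivity
    simp only [smul_eq_mul]
    rw [abs_of_pos (by positivity), show 1 - x ^ 2 / (1 + x ^ 2) = (1 + x ^ 2)⁻¹ by field_simp; ring,
      Real.div_rpow (by positivity) hd.le, Real.inv_rpow hd.le, ← Real.rpow_natCast x 2,
      ← Real.rpow_mul hx.le]
    rw [Real.rpow_natCast x 2]
    rw [show 2 * u - 1 = ((2 : ℕ) : ℝ) * (u - 1) + 1 by push_cast; ring, Real.rpow_add_one hx.ne',
      show -(u + v) = -(u - 1) + -(v - 1) + -(2 : ℕ) by push_cast; ring,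
      Real.rpow_add hd, Real.rpow_add hd, Real.rpow_neg hd.le, Real.rpow_neg hd.le (v - 1),
      Real.rpow_neg hd.le, Real.rpow_natCast]
    field_simp
  rw [integrableOn_congr_fun heq measurableSet_Ioi] at hi
  rw [setIntegral_congr_fun measurableSet_Ioi heq, integral_const_mul] at he
  refine ⟨?_, by linarith⟩
  refine (hi.const_mul (1 / 2)).congr (Filter.Eventually.of_forall fun x => ?_)
  simp only
  ring

theorem integrable_abs_rpow_mul_one_add_sq_rpow {u v : ℝ} (hu : 0 < u) (hv : 0 < v) :
    Integrable (fun x : ℝ => |x| ^ (2 * u - 1) * (1 + x ^ 2) ^ (-(u + v))) ∧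
    ∫ x : ℝ, |x| ^ (2 * u - 1) * (1 + x ^ 2) ^ (-(u + v)) =
      Gamma u * Gamma v / Gamma (u + v) := by
  obtain ⟨hi, he⟩ := integrableOn_Ioi_rpow_mul_one_add_sq_rpow hu hv
  constructor
  · have h1 : IntegrableOn (fun x : ℝ => |x| ^ (2 * u - 1) * (1 + x ^ 2) ^ (-(u + v)))
        (Set.Ioi 0) :=
      hi.congr_fun (fun x hx => by simp only [abs_of_pos (Set.mem_Ioi.1 hx)]) measurableSet_Ioi
    have h2 := h1.comp_neg
    rw [← integrableOn_univ, ← Set.Iic_union_Ioi (a := (0 : ℝ))]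
    refine IntegrableOn.union ?_ h1
    rw [integrableOn_Iic_iff_integrableOn_Iio]
    simpa using h2
  · have h := integral_comp_abs (f := fun x : ℝ => x ^ (2 * u - 1) * (1 + x ^ 2) ^ (-(u + v)))
    simp only [sq_abs] at h
    rw [h, he]
    ring

/-- Even moments of the weight `|x|^(-2a) (1+x²)^(-b)`. -/
theorem integrable_weight_mul_pow {a b : ℝ} (ha : a < 1 / 2) {k : ℕ}
    (hk : (k : ℝ) < a + b - 1 / 2) :
    Integrable (fun x : ℝ => |x| ^ (-2 * a) * (1 + x ^ 2) ^ (-b) * x ^ (2 * k)) ∧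
    ∫ x : ℝ, |x| ^ (-2 * a) * (1 + x ^ 2) ^ (-b) * x ^ (2 * k) =
      Gamma (1 / 2 - a + k) * Gamma (b + a - 1 / 2 - k) / Gamma b := by
  have hk0 : (0 : ℝ) ≤ k := k.cast_nonneg
  have h := integrable_abs_rpow_mul_one_add_sq_rpow (u := 1 / 2 - a + k)
    (v := b + a - 1 / 2 - k) (by linarith) (by linarith)
  have hb : 1 / 2 - a + k + (b + a - 1 / 2 - k) = b := by ring
  rw [hb] at h
  have heq : (fun x : ℝ => |x| ^ (2 * (1 / 2 - a + k) - 1) * (1 + x ^ 2) ^ (-b)) =ᵐ[volume]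
      fun x : ℝ => |x| ^ (-2 * a) * (1 + x ^ 2) ^ (-b) * x ^ (2 * k) := by
    filter_upwards [Measure.ae_ne volume (0 : ℝ)] with x hx
    rw [show 2 * (1 / 2 - a + k) - 1 = -2 * a + ((2 * k : ℕ) : ℝ) by push_cast; ring,
      Real.rpow_add (abs_pos.2 hx), Real.rpow_natCast, pow_mul |x|, sq_abs, ← pow_mul]
    ring
  exact ⟨h.1.congr heq, by rw [← integral_congr_ae heq]; exact h.2⟩

theorem Sbar_two_mul_add (a b : ℝ) (N : ℕ) {e : ℕ} (he : e = 0 ∨ e = 1) (x : ℝ) :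
    Sbar 1 1 (-2 * a - 2 * b + 2) (-2 * a) (2 * N + e) x =
      (pochRatio (1 / 2 + e - a) (a + b - 1 / 2 - e - N) N)⁻¹ *
        ∑ l ∈ range (N + 1), (N.choose l : ℝ) *
          pochRatio (1 / 2 + e - a) (a + b - 1 / 2 - e - N) l * x ^ (2 * l + e) := by
  have hdiv : (2 * N + e) / 2 = N := by omega
  have hsign : (-1 : ℝ) ^ (2 * N + e + 1) = 2 * e - 1 := by
    rw [pow_succ, pow_add, pow_mul]
    rcases he with rfl | rfl <;> norm_num
  have hr : ∀ i : ℕ, ((2 * (i : ℝ) + (2 * e - 1) + 2 * (N : ℝ)) * 1 + (-2 * a - 2 * b + 2)) =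
      2 * ((i : ℝ) - (a + b - 1 / 2 - e - N)) := fun i => by ring
  have hs : ∀ i : ℕ, ((2 * (i : ℝ) + (2 * e - 1) + 2) * 1 + -2 * a) =
      2 * ((i : ℝ) + (1 / 2 + e - a)) := fun i => by ring
  rw [Sbar, S, hdiv, hsign]
  simp only [hr, hs, mul_div_mul_left _ _ (two_ne_zero' ℝ)]
  congr 1
  · rw [pochRatio, ← prod_inv_distrib]
    simp only [inv_div]
  · rw [← sum_range_reflect]
    refine sum_congr rfl fun l hl => ?_
    have hl' : l ≤ N := Nat.lt_succ_iff.1 (mem_range.1 hl)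
    rw [show N + 1 - 1 - l = N - l by omega, Nat.sub_sub_self hl', Nat.choose_symm hl', pochRatio,
      show 2 * N + e - 2 * (N - l) = 2 * l + e by omega]

theorem Sbar_neg (p q r s : ℝ) (n : ℕ) (x : ℝ) :
    Sbar p q r s n (-x) = (-1) ^ n * Sbar p q r s n x := by
  rw [Sbar, Sbar, mul_left_comm]
  congr 1
  rw [S, S, mul_sum]
  refine sum_congr rfl fun k hk => ?_
  have hk' : 2 * k ≤ n := by have := mem_range.1 hk; omega
  obtain ⟨d, rfl⟩ := Nat.exists_eq_add_of_le hk'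
  have hs : (-1 : ℝ) ^ (2 * k + d) = (-1) ^ d := by
    rw [pow_add, pow_mul]
    simp
  rw [Nat.add_sub_cancel_left, neg_pow x, hs]
  ring

theorem integral_weight_mul_Sbar_mul_Sbar_of_odd (a b : ℝ) {n m : ℕ} (h : Odd (n + m)) :
    ∫ x : ℝ, |x| ^ (-2 * a) * (1 + x ^ 2) ^ (-b) *
      Sbar 1 1 (-2 * a - 2 * b + 2) (-2 * a) n x *
      Sbar 1 1 (-2 * a - 2 * b + 2) (-2 * a) m x = 0 := by
  rw [← self_eq_neg, ← integral_neg, ← integral_neg_eq_self]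
  refine integral_congr_ae (Filter.Eventually.of_forall fun x => ?_)
  have hs : (-1 : ℝ) ^ n * (-1) ^ m = -1 := by rw [← pow_add, h.neg_one_pow]
  simp only [Sbar_neg, abs_neg, neg_sq]
  linear_combination |x| ^ (-2 * a) * (1 + x ^ 2) ^ (-b) *
      Sbar 1 1 (-2 * a - 2 * b + 2) (-2 * a) n x *
      Sbar 1 1 (-2 * a - 2 * b + 2) (-2 * a) m x * hs

theorem integral_weight_mul_Sbar_mul_Sbar {a b : ℝ} (ha : a < 1 / 2) {N M e : ℕ}
    (he : e = 0 ∨ e = 1) (h : (N : ℝ) + M < a + b - 1 / 2 - e) :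
    ∫ x : ℝ, |x| ^ (-2 * a) * (1 + x ^ 2) ^ (-b) *
      Sbar 1 1 (-2 * a - 2 * b + 2) (-2 * a) (2 * N + e) x *
      Sbar 1 1 (-2 * a - 2 * b + 2) (-2 * a) (2 * M + e) x =
    (pochRatio (1 / 2 + e - a) (a + b - 1 / 2 - e - N) N)⁻¹ *
      (pochRatio (1 / 2 + e - a) (a + b - 1 / 2 - e - M) M)⁻¹ / Gamma b *
      ∑ j ∈ range (M + 1), (M.choose j : ℝ) *
        pochRatio (1 / 2 + e - a) (a + b - 1 / 2 - e - M) j *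
        ∑ l ∈ range (N + 1), (N.choose l : ℝ) *
          pochRatio (1 / 2 + e - a) (a + b - 1 / 2 - e - N) l *
          (Gamma (1 / 2 + e - a + (l + j)) *
            Gamma (a + b - 1 / 2 - e - N + N - (l + j))) := by
  simp only [Sbar_two_mul_add a b _ he]
  set A := pochRatio (1 / 2 + e - a) (a + b - 1 / 2 - e - N)
  set B := pochRatio (1 / 2 + e - a) (a + b - 1 / 2 - e - M)
  have hmom : ∀ j ∈ range (M + 1), ∀ l ∈ range (N + 1),
      ((e + l + j : ℕ) : ℝ) < a + b - 1 / 2 := by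
    intro j hj l hl
    have h1 : (j : ℝ) ≤ M := by exact_mod_cast Nat.lt_succ_iff.1 (mem_range.1 hj)
    have h2 : (l : ℝ) ≤ N := by exact_mod_cast Nat.lt_succ_iff.1 (mem_range.1 hl)
    push_cast
    linarith
  have hpt : ∀ x : ℝ, |x| ^ (-2 * a) * (1 + x ^ 2) ^ (-b) *
      ((A N)⁻¹ * ∑ l ∈ range (N + 1), (N.choose l : ℝ) * A l * x ^ (2 * l + e)) *
      ((B M)⁻¹ * ∑ j ∈ range (M + 1), (M.choose j : ℝ) * B j * x ^ (2 * j + e)) =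
      (A N)⁻¹ * (B M)⁻¹ * ∑ j ∈ range (M + 1), (M.choose j : ℝ) * B j *
        ∑ l ∈ range (N + 1), (N.choose l : ℝ) * A l *
          (|x| ^ (-2 * a) * (1 + x ^ 2) ^ (-b) * x ^ (2 * (e + l + j))) := by
    intro x
    simp only [mul_sum, sum_mul]
    refine sum_congr rfl fun j _ => sum_congr rfl fun l _ => ?_
    ring
  simp only [hpt]
  rw [integral_const_mul, integral_finsetSum]
  · rw [div_mul_eq_mul_div, mul_div_assoc, sum_div]
    congr 1
    refine sum_congr rfl fun j hj => ?_
    rw [integral_const_mul, integral_finsetSum, mul_div_assoc, sum_div]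
    · congr 1
      refine sum_congr rfl fun l hl => ?_
      rw [integral_const_mul, (integrable_weight_mul_pow ha (hmom j hj l hl)).2, mul_div_assoc]
      push_cast
      ring_nf
    · exact fun l hl => (integrable_weight_mul_pow ha (hmom j hj l hl)).1.const_mul _
  · exact fun j hj => (integrable_finsetSum _ fun l hl =>
      (integrable_weight_mul_pow ha (hmom j hj l hl)).1.const_mul _).const_mul _

theorem integral_weight_mul_Sbar_mul_Sbar_of_lt {a b : ℝ} (ha : a < 1 / 2) {N M e : ℕ}
    (he : e = 0 ∨ e = 1) (hMN : M < N) (h : (N : ℝ) + M < a + b - 1 / 2 - e) :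
    ∫ x : ℝ, |x| ^ (-2 * a) * (1 + x ^ 2) ^ (-b) *
      Sbar 1 1 (-2 * a - 2 * b + 2) (-2 * a) (2 * N + e) x *
      Sbar 1 1 (-2 * a - 2 * b + 2) (-2 * a) (2 * M + e) x = 0 := by
  rw [integral_weight_mul_Sbar_mul_Sbar ha he h]
  refine mul_eq_zero_of_right _ (sum_eq_zero fun j hj => mul_eq_zero_of_right _ ?_)
  have hj' : j ≤ M := Nat.lt_succ_iff.1 (mem_range.1 hj)
  have hjr : (j : ℝ) ≤ M := by exact_mod_cast hj'
  have he0 : (0 : ℝ) ≤ e := e.cast_nonneg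
  exact sum_choose_mul_pochRatio_mul_Gamma_eq_zero (by linarith) (by omega) (by linarith)

theorem integral_weight_mul_Sbar_sq {a b : ℝ} (ha : a < 1 / 2) {N e : ℕ}
    (he : e = 0 ∨ e = 1) (h : 2 * (N : ℝ) < a + b - 1 / 2 - e) :
    ∫ x : ℝ, |x| ^ (-2 * a) * (1 + x ^ 2) ^ (-b) *
      Sbar 1 1 (-2 * a - 2 * b + 2) (-2 * a) (2 * N + e) x *
      Sbar 1 1 (-2 * a - 2 * b + 2) (-2 * a) (2 * N + e) x =
    Gamma (1 / 2 + e - a + N) * Gamma (a + b - 1 / 2 - e - 2 * N) *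
      (∏ i ∈ range N, (b - N + i)) * N.factorial /
      (∏ i ∈ range N, (a + b - 1 / 2 - e - N - i)) / Gamma b := by
  rw [integral_weight_mul_Sbar_mul_Sbar ha he (by linarith)]
  have he0 : (0 : ℝ) ≤ e := e.cast_nonneg
  have hN0 : (0 : ℝ) ≤ N := N.cast_nonneg
  set α : ℝ := 1 / 2 + e - a with hα
  set γ : ℝ := a + b - 1 / 2 - e - N with hγ
  have hα0 : 0 < α := by linarith
  have hγN : (N : ℝ) < γ := by linarith
  rw [sum_range_succ, sum_eq_zero, zero_add, sum_choose_mul_pochRatio_mul_Gamma_self hα0 hγN]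
  · have h1 := pochRatio_mul_Gamma hα0 γ N 0
    have h2 := prod_sub_mul_Gamma (γ := γ) (k := 0) (l := N + 1) (by linarith)
      (by push_cast; linarith)
    simp only [range_zero, prod_empty, mul_one, Nat.cast_zero, add_zero] at h1 h2
    rw [show γ - ((N + 1 : ℕ) : ℝ) + 1 = a + b - 1 / 2 - e - 2 * N by rw [hγ]; push_cast; ring] at h2
    have hprod : ∀ k ≤ N + 1, ∏ i ∈ range k, (γ - (i : ℝ)) ≠ 0 := by
      refine fun k hk => prod_ne_zero_iff.2 fun i hi => ?_
      have : i ≤ N := by have := mem_range.1 hi; omega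
      have : (i : ℝ) ≤ N := by exact_mod_cast this
      linarith
    have hA : pochRatio α γ N ≠ 0 := by
      refine prod_ne_zero_iff.2 fun i hi => div_ne_zero ?_ (by positivity)
      have : (i : ℝ) < N := by exact_mod_cast mem_range.1 hi
      linarith
    have hb : ∏ i ∈ range N, (b - N + (i : ℝ)) = ∏ i ∈ range N, (α + γ + i) :=
      prod_congr rfl fun i _ => by rw [hα, hγ]; ring
    have hp1 := hprod (N + 1) le_rfl
    have hp2 := hprod N (Nat.le_succ N)
    rw [hb, ← h2, Nat.choose_self, Nat.cast_one, one_mul]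
    have h3 : (pochRatio α γ N)⁻¹ * ((-1) ^ N * Gamma α) =
        Gamma (α + N) / ∏ i ∈ range N, (γ - (i : ℝ)) := by
      rw [eq_div_iff hp2, inv_mul_eq_div, div_mul_eq_mul_div, div_eq_iff hA]
      linear_combination -h1
    calc _ = ((pochRatio α γ N)⁻¹ * ((-1) ^ N * Gamma α)) *
          ((pochRatio α γ N)⁻¹ * pochRatio α γ N) * Gamma (a + b - 1 / 2 - e - 2 * N) *
          ((∏ i ∈ range (N + 1), (γ - (i : ℝ))) / ∏ i ∈ range (N + 1), (γ - (i : ℝ))) *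
          (∏ i ∈ range N, (α + γ + i)) * N.factorial / Gamma b := by ring
      _ = _ := by rw [h3, inv_mul_cancel₀ hA, div_self hp1]; ring
  · intro j hj
    have hj' : j < N := mem_range.1 hj
    have hjr : (j : ℝ) < N := by exact_mod_cast hj'
    exact mul_eq_zero_of_right _
      (sum_choose_mul_pochRatio_mul_Gamma_eq_zero hα0 hj' (by linarith))

theorem neg_one_pow_mul_prod_mul_Gamma {a b : ℝ} (ha : a < 1 / 2) {N e : ℕ}
    (he : e = 0 ∨ e = 1) (h : 2 * (N : ℝ) < a + b - 1 / 2 - e) :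
    (-1 : ℝ) ^ (2 * N + e) *
      (∏ i ∈ range (2 * N + e),
        ((((i : ℝ) + 1) - (1 - (-1 : ℝ) ^ (i + 1)) * a)
            * (((i : ℝ) + 1) - (1 - (-1 : ℝ) ^ (i + 1)) * a - 2 * b)) /
          ((2 * ((i : ℝ) + 1) - 2 * a - 2 * b + 1)
            * (2 * ((i : ℝ) + 1) - 2 * a - 2 * b - 1))) *
      (Gamma (b + a - 1 / 2) * Gamma (1 / 2 - a)) =
    Gamma (1 / 2 + e - a + N) * Gamma (a + b - 1 / 2 - e - 2 * N) *
      (∏ i ∈ range N, (b - N + i)) * N.factorial /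
      (∏ i ∈ range N, (a + b - 1 / 2 - e - N - i)) := by
  have he0 : (0 : ℝ) ≤ e := e.cast_nonneg
  induction N with
  | zero =>
    rcases he with rfl | rfl
    · simp
      rw [mul_comm, add_comm b a]
    · push_cast at h
      have h1 : Gamma (b + a - 1 / 2) = (a + b - 3 / 2) * Gamma (a + b - 3 / 2) := by
        rw [← Real.Gamma_add_one (by linarith)]
        congr 1
        ring
      have h2 : Gamma (1 / 2 + 1 - a) = (1 / 2 - a) * Gamma (1 / 2 - a) := by
        rw [← Real.Gamma_add_one (by linarith)]
        congr 1
        ring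
      have h3 : a + b - 1 / 2 - 1 = a + b - 3 / 2 := by ring
      simp only [mul_zero, zero_add, pow_one, range_one, prod_singleton, Nat.cast_zero, range_zero,
        prod_empty, Nat.factorial_zero, Nat.cast_one, mul_one, div_one, add_zero, sub_zero]
      rw [h1, h2, h3]
      obtain ⟨t, ht⟩ : ∃ t, t = a + b - 3 / 2 := ⟨_, rfl⟩
      have h4 : t ≠ 0 := by linarith
      have h5 : t + 1 ≠ 0 := by linarith
      rw [← ht, show 2 - 2 * a - 2 * b + 1 = -2 * t by rw [ht]; ring,
        show 2 - 2 * a - 2 * b - 1 = -2 * (t + 1) by rw [ht]; ring,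
        show b = t - a + 3 / 2 by rw [ht]; ring]
      generalize Gamma t = G
      generalize Gamma (1 / 2 - a) = G'
      field_simp
      ring
  | succ N ih =>
    push_cast at h
    have hN0 : (0 : ℝ) ≤ N := N.cast_nonneg
    have ih := ih (by linarith)
    set β : ℝ := a + b - 1 / 2 - e with hβ
    have hG1 : Gamma (1 / 2 + e - a + (N + 1)) =
        (1 / 2 + e - a + N) * Gamma (1 / 2 + e - a + N) := by
      rw [← Real.Gamma_add_one (by linarith)]
      congr 1
      ring
    have hG2 : Gamma (β - 2 * N) =
        (β - 2 * N - 1) * ((β - 2 * N - 2) * Gamma (β - 2 * (N + 1))) := by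
      rw [show β - 2 * N - 2 = β - 2 * (N + 1) by ring, ← Real.Gamma_add_one (by linarith),
        show β - 2 * (N + 1) + 1 = β - 2 * N - 1 by ring, ← Real.Gamma_add_one (by linarith)]
      congr 1
      ring
    have hP1 : ∏ i ∈ range (N + 1), (b - (N + 1) + (i : ℝ)) =
        (b - N - 1) * ∏ i ∈ range N, (b - N + (i : ℝ)) := by
      rw [prod_range_succ', mul_comm]
      congr 1
      · push_cast
        ring
      · exact prod_congr rfl fun i _ => by push_cast; ring
    have hP2 : (β - N) * ∏ i ∈ range (N + 1), (β - (N + 1) - (i : ℝ)) =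
        (∏ i ∈ range N, (β - N - (i : ℝ))) * (β - 2 * N) * (β - 2 * N - 1) := by
      have h1 := prod_range_succ' (fun i : ℕ => β - N - (i : ℝ)) (N + 1)
      rw [prod_range_succ, prod_range_succ] at h1
      have h2 : ∏ i ∈ range (N + 1), (β - (N + 1) - (i : ℝ)) =
          ∏ i ∈ range (N + 1), (β - N - ((i + 1 : ℕ) : ℝ)) :=
        prod_congr rfl fun i _ => by push_cast; ring
      rw [h2]
      push_cast at h1 ⊢
      linear_combination -h1
    have hD : ∏ i ∈ range N, (β - N - (i : ℝ)) ≠ 0 := by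
      refine prod_ne_zero_iff.2 fun i hi => ?_
      have : (i : ℝ) < N := by exact_mod_cast mem_range.1 hi
      linarith
    have hD' : ∏ i ∈ range (N + 1), (β - (N + 1) - (i : ℝ)) ≠ 0 := by
      refine prod_ne_zero_iff.2 fun i hi => ?_
      have : (i : ℝ) < N + 1 := by exact_mod_cast mem_range.1 hi
      linarith
    have hn0 : β - N ≠ 0 := by linarith
    have hn1 : β - 2 * N ≠ 0 := by linarith
    have hn2 : β - 2 * N - 1 ≠ 0 := by linarith
    have hn3 : β - 2 * N - 2 ≠ 0 := by linarith
    have hstep : ∀ T : ℕ → ℝ, (∀ i : ℕ, T i =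
        ((((i : ℝ) + 1) - (1 - (-1 : ℝ) ^ (i + 1)) * a)
            * (((i : ℝ) + 1) - (1 - (-1 : ℝ) ^ (i + 1)) * a - 2 * b)) /
          ((2 * ((i : ℝ) + 1) - 2 * a - 2 * b + 1)
            * (2 * ((i : ℝ) + 1) - 2 * a - 2 * b - 1))) →
        T (2 * N + e) * T (2 * N + e + 1) =
          (1 / 2 + e - a + N) * (β - N) * (N + 1) * (b - N - 1) /
          ((β - 2 * N) * (β - 2 * N - 1) ^ 2 * (β - 2 * N - 2)) := by
      intro T hT
      have hd1 : 2 * (((2 * N + e : ℕ) : ℝ) + 1) - 2 * a - 2 * b + 1 = -2 * (β - 2 * N - 1) := by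
        rw [hβ]; push_cast; ring
      have hd2 : 2 * (((2 * N + e : ℕ) : ℝ) + 1) - 2 * a - 2 * b - 1 = -2 * (β - 2 * N) := by
        rw [hβ]; push_cast; ring
      have hd3 : 2 * (((2 * N + e + 1 : ℕ) : ℝ) + 1) - 2 * a - 2 * b + 1 =
          -2 * (β - 2 * N - 2) := by
        rw [hβ]; push_cast; ring
      have hd4 : 2 * (((2 * N + e + 1 : ℕ) : ℝ) + 1) - 2 * a - 2 * b - 1 =
          -2 * (β - 2 * N - 1) := by
        rw [hβ]; push_cast; ring
      rw [hT, hT, hd1, hd2, hd3, hd4]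
      have hs : (-1 : ℝ) ^ (2 * N + e + 1) = 2 * e - 1 ∧
          (-1 : ℝ) ^ (2 * N + e + 1 + 1) = 1 - 2 * e := by
        constructor <;> rw [add_assoc] <;> try rw [add_assoc]
        all_goals rw [pow_add, pow_mul]
        all_goals rcases he with rfl | rfl <;> norm_num
      rw [hs.1, hs.2]
      field_simp
      rw [hβ]
      rcases he with rfl | rfl <;> push_cast <;> ring
    rw [show 2 * (N + 1) + e = 2 * N + e + 1 + 1 by ring, prod_range_succ, prod_range_succ,
      mul_assoc (∏ i ∈ range (2 * N + e), _), hstep _ fun i => rfl, pow_succ, pow_succ,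
      Nat.factorial_succ]
    push_cast
    rw [hP1, hG1]
    rw [hG2, eq_div_iff hD] at ih
    rw [eq_div_iff hD']
    have hP2' := eq_div_of_mul_eq hn0 ((mul_comm _ _).trans hP2)
    rw [hP2']
    generalize 1 / 2 + (e : ℝ) - a + N = u at ih ⊢
    generalize ∏ i ∈ range N, (β - N - (i : ℝ)) = D at ih hD ⊢
    generalize Gamma (β - 2 * (N + 1)) = G at ih ⊢
    generalize ∏ i ∈ range N, (b - N + (i : ℝ)) = B at ih ⊢
    generalize Gamma u = U at ih ⊢
    generalize Gamma (b + a - 1 / 2) * Gamma (1 / 2 - a) = V at ih ⊢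
    generalize (∏ i ∈ range (2 * N + e), (_ : ℝ)) = T at ih ⊢
    generalize β - 2 * N - 2 = d₃ at ih hn3 ⊢
    generalize β - 2 * N - 1 = d₂ at ih hn2 ⊢
    generalize β - 2 * N = d₁ at hn1 ⊢
    generalize β - N = d₀ at hn0 ⊢
    field_simp
    linear_combination u * (b - N - 1) * ih


/-- Finite orthogonality of the third subclass `S̄_n(1,1,−2a−2b+2,−2a;·)` with respect to
the weight `|x|^{−2a}(1+x²)^{−b}` on `(−∞,∞)`, valid when `n + m < 2(a+b) − 1`. -/
theorem finite_orthogonality_third_subclass (a b : ℝ) (ha : a < 1 / 2) (hb : 0 < b)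
    (n m : ℕ) (hnm : (n : ℝ) + (m : ℝ) < 2 * (a + b) - 1)
    (hden : ∀ j : ℤ, Odd j → 1 ≤ |j| → |j| ≤ 2 * (max n m : ℤ) + 1 →
      2 * (a + b) - (j : ℝ) ≠ 0) :
    ∫ x : ℝ,
        |x| ^ (-2 * a) * (1 + x ^ 2) ^ (-b) *
          Sbar 1 1 (-2 * a - 2 * b + 2) (-2 * a) n x *
          Sbar 1 1 (-2 * a - 2 * b + 2) (-2 * a) m x =
      (if n = m then (1 : ℝ) else 0) * (-1 : ℝ) ^ n *
        (∏ i ∈ Finset.range n,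
          ((((i : ℝ) + 1) - (1 - (-1 : ℝ) ^ (i + 1)) * a)
              * (((i : ℝ) + 1) - (1 - (-1 : ℝ) ^ (i + 1)) * a - 2 * b)) /
            ((2 * ((i : ℝ) + 1) - 2 * a - 2 * b + 1)
              * (2 * ((i : ℝ) + 1) - 2 * a - 2 * b - 1))) *
        (Real.Gamma (b + a - 1 / 2) * Real.Gamma (1 / 2 - a) / Real.Gamma b) := by
  rcases Nat.even_or_odd (n + m) with hpar | hpar
  swap
  · have hne : n ≠ m := by
      rintro rfl
      exact Nat.not_even_iff_odd.2 hpar ⟨n, rfl⟩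
    rw [integral_weight_mul_Sbar_mul_Sbar_of_odd a b hpar, if_neg hne]
    ring
  obtain ⟨N, M, e, he, rfl, rfl⟩ :
      ∃ N M e : ℕ, (e = 0 ∨ e = 1) ∧ n = 2 * N + e ∧ m = 2 * M + e := by
    rw [Nat.even_iff] at hpar
    exact ⟨n / 2, m / 2, n % 2, by omega, by omega, by omega⟩
  push_cast at hnm
  rcases lt_trichotomy M N with hMN | rfl | hMN
  · rw [integral_weight_mul_Sbar_mul_Sbar_of_lt ha he hMN (by linarith), if_neg (by omega)]
    ring
  · rw [integral_weight_mul_Sbar_sq ha he (by linarith), if_pos rfl, one_mul, ← mul_div_assoc,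
      neg_one_pow_mul_prod_mul_Gamma ha he (by linarith)]
  · have hcomm := integral_weight_mul_Sbar_mul_Sbar_of_lt ha he hMN
      (by linarith : (M : ℝ) + N < a + b - 1 / 2 - e)
    rw [if_neg (by omega), zero_mul, zero_mul, zero_mul, ← hcomm]
    exact integral_congr_ae (Filter.Eventually.of_forall fun x => mul_right_comm _ _ _)
end

section
/- For every natural number n ≥ 1 and every real x, the monic Chebyshev polynomial of the sixth kind of degree 2n factors as S̄_{2n}(−1, 1, −5, 2; x) = ∏_{k=1, k≠n+1}^{2n+1} ( x − cos(kπ/(2n+2)) ), the product running over k = 1, …, 2n+1 with k = n+1 omitted. -/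
open Finset Real MeasureTheory

open Polynomial.Chebyshev in
theorem coeff_U_add_two_mul (m k : ℕ) :
    (U ℝ ((m + 2 * k : ℕ) : ℤ)).coeff m = (-1) ^ k * (Nat.choose (m + k) k : ℝ) * 2 ^ m := by
  induction k generalizing m with
  | zero =>
    have h := leadingCoeff_U_natCast ℝ m
    rw [Polynomial.leadingCoeff, natDegree_U_natCast] at h
    simpa using h
  | succ k ihk =>
    induction m with
    | zero =>
      rw [Polynomial.coeff_zero_eq_eval_zero]
      push_cast
      simp [pow_succ, Int.negOnePow_succ]
    | succ m ihm =>
      have hU : U ℝ ((m + 1 + 2 * (k + 1) : ℕ) : ℤ) =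
          Polynomial.C 2 * (Polynomial.X * U ℝ ((m + 2 * (k + 1) : ℕ) : ℤ)) -
            U ℝ ((m + 1 + 2 * k : ℕ) : ℤ) := by
        have h := U_add_two ℝ ((m + 1 + 2 * k : ℕ) : ℤ)
        have e₁ : ((m + 1 + 2 * (k + 1) : ℕ) : ℤ) = ((m + 1 + 2 * k : ℕ) : ℤ) + 2 := by
          push_cast; ring
        have e₂ : ((m + 2 * (k + 1) : ℕ) : ℤ) = ((m + 1 + 2 * k : ℕ) : ℤ) + 1 := by
          push_cast; ring
        rw [e₁, e₂, h, Polynomial.C_ofNat]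
        ring
      have pascal : (Nat.choose (m + 1 + (k + 1)) (k + 1) : ℝ) =
          Nat.choose (m + 1 + k) k + Nat.choose (m + (k + 1)) (k + 1) := by
        rw [show m + 1 + (k + 1) = (m + 1 + k) + 1 by ring, Nat.choose_succ_succ,
          show m + 1 + k = m + (k + 1) by ring]
        push_cast; ring
      rw [hU, Polynomial.coeff_sub, Polynomial.coeff_C_mul, Polynomial.coeff_X_mul, ihm,
        ihk, pascal]
      ring

open Polynomial.Chebyshev in
theorem eval_U_two_mul_add_one (n : ℕ) (x : ℝ) :
    (U ℝ ((2 * n + 1 : ℕ) : ℤ)).eval x =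
      ∑ j ∈ range (n + 1),
        (U ℝ ((2 * n + 1 : ℕ) : ℤ)).coeff (2 * j + 1) * x ^ (2 * j + 1) := by
  have pair (f : ℕ → ℝ) (N : ℕ) :
      ∑ i ∈ range (2 * N), f i = ∑ j ∈ range N, (f (2 * j) + f (2 * j + 1)) := by
    induction N with
    | zero => simp
    | succ N ih => rw [mul_add, mul_one, sum_range_succ, sum_range_succ, ih, sum_range_succ]; ring
  have expand (y : ℝ) : (U ℝ ((2 * n + 1 : ℕ) : ℤ)).eval y =
      ∑ j ∈ range (n + 1),
        ((U ℝ ((2 * n + 1 : ℕ) : ℤ)).coeff (2 * j) * y ^ (2 * j) +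
          (U ℝ ((2 * n + 1 : ℕ) : ℤ)).coeff (2 * j + 1) * y ^ (2 * j + 1)) := by
    rw [Polynomial.eval_eq_sum_range, natDegree_U_natCast,
      show 2 * n + 1 + 1 = 2 * (n + 1) by ring, pair]
  have odd : (U ℝ ((2 * n + 1 : ℕ) : ℤ)).eval (-x) = -(U ℝ ((2 * n + 1 : ℕ) : ℤ)).eval x := by
    rw [U_eval_neg, Int.negOnePow_odd _ ⟨(n : ℤ), by push_cast; ring⟩]
    simp
  have h₁ := expand x
  have h₂ := expand (-x)
  rw [odd] at h₂
  simp only [sum_add_distrib, Even.neg_pow (even_two_mul _), Odd.neg_pow (odd_two_mul_add_one _),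
    mul_neg, sum_neg_distrib] at h₁ h₂
  linarith

open Polynomial.Chebyshev in
theorem eval_U_eq_prod (N : ℕ) (x : ℝ) :
    (U ℝ (N : ℤ)).eval x =
      2 ^ N * ∏ k ∈ Icc 1 N, (x - Real.cos ((k : ℝ) * Real.pi / ((N : ℝ) + 1))) := by
  have hroots : (U ℝ (N : ℤ)).roots =
      (Multiset.range N).map (fun k : ℕ ↦ Real.cos ((k + 1) * Real.pi / (N + 1))) := by
    rw [roots_U_real, Finset.image_val, Finset.range_val, (roots_U_real_nodup N).dedup]
  have hfac := Polynomial.C_leadingCoeff_mul_prod_multiset_X_sub_C (p := U ℝ (N : ℤ))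
    (by rw [hroots, natDegree_U_natCast]; simp)
  rw [← hfac, leadingCoeff_U_natCast, hroots, Multiset.map_map, Polynomial.eval_mul,
    Polynomial.eval_C, Polynomial.eval_multiset_prod, Multiset.map_map]
  congr 1
  rw [← Finset.range_val]
  change ∏ k ∈ range N, _ = _
  rw [← Finset.Ico_add_one_right_eq_Icc, Finset.prod_Ico_eq_prod_range]
  refine prod_congr (by simp) fun k _ ↦ ?_
  simp [add_comm]

theorem cast_choose_step (n j : ℕ) (hj : j ≤ n) :
    (Nat.choose (n + j + 2) (2 * j + 3) : ℝ) * ((2 * j + 2) * (2 * j + 3)) =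
      Nat.choose (n + j + 1) (2 * j + 1) * ((n + j + 2) * (n - j)) := by
  have h₁ := Nat.add_one_mul_choose_eq (n + j + 1) (2 * j + 2)
  have h₂ := Nat.choose_succ_right_eq (n + j + 1) (2 * j + 1)
  rw [show n + j + 1 - (2 * j + 1) = n - j by omega] at h₂
  have h₁' := congrArg (Nat.cast (R := ℝ)) h₁
  have h₂' := congrArg (Nat.cast (R := ℝ)) h₂
  push_cast [hj] at h₁' h₂'
  linear_combination (-(2 * (j : ℝ) + 2)) * h₁' + ((n : ℝ) + j + 2) * h₂'

theorem choose_mul_prod_sixth_kind (n j : ℕ) (hj : j ≤ n) :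
    2 * ((n : ℝ) + 1) * (Nat.choose n j *
      ∏ i ∈ range j, (-(2 * (i : ℝ) + 2 * n + 4) / (2 * i + 3))) =
      (-1) ^ j * Nat.choose (n + j + 1) (2 * j + 1) * 2 ^ (2 * j + 1) := by
  induction j with
  | zero => simp; ring
  | succ j ih =>
    have ih := ih (by omega)
    have hc := cast_choose_step n j (by omega)
    have hn := congrArg (Nat.cast (R := ℝ)) (Nat.choose_succ_right_eq n j)
    push_cast [show j ≤ n by omega] at hn
    rw [prod_range_succ, show n + (j + 1) + 1 = n + j + 2 by ring,
      show 2 * (j + 1) + 1 = 2 * j + 3 by ring]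
    set P := ∏ i ∈ range j, (-(2 * (i : ℝ) + 2 * n + 4) / (2 * i + 3))
    have h₃ : (2 * (j : ℝ) + 3) ≠ 0 := by positivity
    have h₁ : ((j : ℝ) + 1) ≠ 0 := by positivity
    field_simp
    apply mul_right_cancel₀ h₁
    linear_combination (-(4 * ((n : ℝ) + 1) * P * (j + n + 2))) * hn
      - 2 * ((j : ℝ) + n + 2) * (n - j) * ih + 2 * (-1) ^ j * 2 ^ (2 * j + 1) * hc

theorem S_two_mul_sixth_kind (n : ℕ) (x : ℝ) :
    S (-1) 1 (-5) 2 (2 * n) x = ∑ j ∈ range (n + 1), (Nat.choose n j *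
      ∏ i ∈ range j, (-(2 * (i : ℝ) + 2 * n + 4) / (2 * i + 3))) * x ^ (2 * j) := by
  rw [S, show 2 * n / 2 = n by omega, ← sum_range_reflect]
  refine sum_congr rfl fun j hj ↦ ?_
  have hj : j ≤ n := by simpa [Nat.lt_succ_iff] using hj
  rw [show n + 1 - 1 - j = n - j by omega, Nat.choose_symm hj, Nat.sub_sub_self hj,
    show 2 * n - 2 * (n - j) = 2 * j by omega, Odd.neg_one_pow (odd_two_mul_add_one n)]
  congr 2
  refine prod_congr rfl fun i _ ↦ ?_
  congr 1 <;> ring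

open Polynomial.Chebyshev in
theorem mul_S_two_mul_sixth_kind (n : ℕ) (x : ℝ) :
    2 * ((n : ℝ) + 1) * (x * S (-1) 1 (-5) 2 (2 * n) x) =
      (-1) ^ n * (U ℝ ((2 * n + 1 : ℕ) : ℤ)).eval x := by
  rw [S_two_mul_sixth_kind, eval_U_two_mul_add_one, mul_sum, mul_sum, mul_sum]
  refine sum_congr rfl fun j hj ↦ ?_
  have hj : j ≤ n := by simpa [Nat.lt_succ_iff] using hj
  obtain ⟨k, rfl⟩ := Nat.exists_eq_add_of_le hj
  have hU := coeff_U_add_two_mul (2 * j + 1) k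
  rw [show 2 * j + 1 + 2 * k = 2 * (j + k) + 1 by ring] at hU
  have hsymm : Nat.choose (2 * j + 1 + k) k = Nat.choose (j + k + j + 1) (2 * j + 1) := by
    rw [show j + k + j + 1 = 2 * j + 1 + k by ring, Nat.choose_symm_add]
  have hk : (-1 : ℝ) ^ k * (-1) ^ k = 1 := by rw [← mul_pow]; simp
  rw [hU, hsymm, pow_add (-1 : ℝ) j k]
  linear_combination x ^ (2 * j + 1) * choose_mul_prod_sixth_kind (j + k) j hj
    - (-1) ^ j * Nat.choose (j + k + j + 1) (2 * j + 1) * 2 ^ (2 * j + 1) * x ^ (2 * j + 1) * hk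

theorem Sbar_two_mul_sixth_kind (n : ℕ) (x : ℝ) :
    (-1) ^ n * 2 ^ (2 * n + 1) * Sbar (-1) 1 (-5) 2 (2 * n) x =
      2 * ((n : ℝ) + 1) * S (-1) 1 (-5) 2 (2 * n) x := by
  have hlead := choose_mul_prod_sixth_kind n n le_rfl
  rw [show n + n + 1 = 2 * n + 1 by ring, Nat.choose_self, Nat.choose_self, Nat.cast_one,
    one_mul, mul_one] at hlead
  have hinv : (∏ i ∈ range n, (-(2 * (i : ℝ) + 2 * n + 4) / (2 * i + 3))) *
      ∏ i ∈ range (2 * n / 2),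
        ((2 * (i : ℝ) + (-1 : ℝ) ^ (2 * n + 1) + 2) * 1 + 2) /
          ((2 * (i : ℝ) + (-1 : ℝ) ^ (2 * n + 1) + 2 * ((2 * n / 2 : ℕ) : ℝ)) * (-1) + -5) = 1 := by
    rw [show 2 * n / 2 = n by omega, ← prod_mul_distrib]
    refine prod_eq_one fun i _ ↦ ?_
    rw [Odd.neg_one_pow (odd_two_mul_add_one n)]
    have h₁ : 2 * (i : ℝ) + 3 ≠ 0 := by positivity
    have h₂ : 2 * (i : ℝ) + 2 * n + 4 ≠ 0 := by positivity
    rw [show (2 * (i : ℝ) + -1 + 2) * 1 + 2 = 2 * i + 3 by ring,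
      show (2 * (i : ℝ) + -1 + 2 * n) * -1 + -5 = -(2 * i + 2 * n + 4) by ring,
      div_mul_div_cancel₀ h₁, div_self (neg_ne_zero.mpr h₂)]
  rw [Sbar, ← hlead]
  linear_combination 2 * ((n : ℝ) + 1) * S (-1) 1 (-5) 2 (2 * n) x * hinv

/-- Factorization of the monic Chebyshev polynomials of the sixth kind of even degree:
`S̄_{2n}(−1,1,−5,2;x) = ∏_{k=1,k≠n+1}^{2n+1} (x − cos(kπ/(2n+2)))`. -/
theorem sixth_kind_chebyshev_factorization (n : ℕ) (hn : 1 ≤ n) (x : ℝ) :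
    Sbar (-1) 1 (-5) 2 (2 * n) x =
      ∏ k ∈ (Finset.Icc 1 (2 * n + 1)).erase (n + 1),
        (x - Real.cos ((k : ℝ) * Real.pi / (2 * (n : ℝ) + 2))) := by
  revert x
  rw [← funext_iff]
  refine Continuous.ext_on (dense_compl_singleton (0 : ℝ)) (by unfold Sbar S; fun_prop)
    (by fun_prop) fun x hx ↦ ?_
  have hx : x ≠ 0 := hx
  have hU := eval_U_eq_prod (2 * n + 1) x
  have hmid : Real.cos (((n + 1 : ℕ) : ℝ) * Real.pi / (2 * (n : ℝ) + 2)) = 0 := by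
    rw [← Real.cos_pi_div_two]
    congr 1
    push_cast
    field_simp
  rw [show (((2 * n + 1 : ℕ) : ℝ) + 1) = 2 * (n : ℝ) + 2 by push_cast; ring,
    ← mul_prod_erase _ _ (show n + 1 ∈ Icc 1 (2 * n + 1) by simp; omega), hmid, sub_zero] at hU
  have hne : (-1 : ℝ) ^ n * 2 ^ (2 * n + 1) * x ≠ 0 := by simp [hx]
  apply mul_left_cancel₀ hne
  linear_combination x * Sbar_two_mul_sixth_kind n x + mul_S_two_mul_sixth_kind n x
    + (-1) ^ n * hU
end
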